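/- Let l and r be positive integers and ζ a primitive l-th root of unity. Then Q'_{(r^l)}(x; q, ζ) = (−1)^{(l−1)r} · (p_l ∘ h_r)(x), where (r^l) denotes the rectangular partition with l parts equal to r. -/

import Mathlib

open MvPolynomial

noncomputable section MacdonaldPreliminaries

/-! ### Base fields: `KK = ℂ(q)` and `FF = ℂ(q)(t)` -/

/-- The field `ℂ(q)` of rational functions in the indeterminate `q`. -/
abbrev KK : Type := RatFunc ℂ

/-- The field `ℂ(q)(t) = ℂ(q,t)`, rational functions in `t` over `ℂ(q)`. -/
abbrev FF : Type := RatFunc KK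

/-- The indeterminate `q`, as an element of `ℂ(q)`. -/
def qK : KK := RatFunc.X

/-- The indeterminate `q`, as an element of `ℂ(q,t)`. -/
def qF : FF := RatFunc.C qK

/-- The indeterminate `t`, as an element of `ℂ(q,t)`. -/
def tF : FF := RatFunc.X

/-! ### The ring of symmetric functions

We model the ring `Λ_R` of symmetric functions over `R` as the free commutative
`R`-algebra on the power sums `p₁, p₂, p₃, …`, i.e. as the polynomial ring in
countably many variables `X k`, `k : ℕ+`, where `X k` represents the power sum `p_k`. -/

/-- The ring of symmetric functions over `R`: polynomials in the power sums `p_k = X k`. -/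
abbrev SymFn (R : Type) [CommSemiring R] : Type := MvPolynomial ℕ+ R

section Core

variable {R : Type} [Field R]

/-- The power sum `p_d` for `d : ℕ`, with `p_0 = 1` by convention. -/
def pN (d : ℕ) : SymFn R := if h : 0 < d then X (⟨d, h⟩ : ℕ+) else 1

/-- `p_λ = ∏ p_{λᵢ}` for a partition `λ` given as a multiset of positive parts. -/
def pPar (lam : Multiset ℕ+) : SymFn R := (lam.map fun k => (X k : SymFn R)).prod

/-- The complete homogeneous symmetric functions, defined by Newton's recursion
`n·h_n = ∑_{i=1}^n p_i · h_{n-i}` with `h_0 = 1`. -/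
def hsym : ℕ → SymFn R
  | 0 => 1
  | (n+1) => (((n : R) + 1)⁻¹) • ∑ i ∈ Finset.range (n+1),
      (X (⟨i+1, Nat.succ_pos i⟩ : ℕ+) : SymFn R) * hsym (n - i)
decreasing_by exact Nat.lt_succ_of_le (Nat.sub_le n i)

/-- `h_z` for an integer index, vanishing for negative `z` (used in Jacobi–Trudi). -/
def hInt (z : ℤ) : SymFn R := if 0 ≤ z then hsym (R := R) z.toNat else 0

/-- The parts of a partition (a multiset of positive integers), sorted decreasingly. -/
def descParts (lam : Multiset ℕ+) : List ℕ :=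
  ((lam.map fun a : ℕ+ => (a : ℕ)).sort (· ≤ ·)).reverse

/-- The weight `|λ|` of a partition. -/
def wt (lam : Multiset ℕ+) : ℕ := (lam.map fun a : ℕ+ => (a : ℕ)).sum

/-- The Schur function `s_λ`, via the Jacobi–Trudi formula
`s_λ = det(h_{λᵢ - i + j})₁≤i,j≤ℓ`. -/
def schur (lam : Multiset ℕ+) : SymFn R :=
  Matrix.det (Matrix.of fun i j : Fin (Multiset.card lam) =>
    hInt (R := R) ((((descParts lam).getD i 0 : ℕ) : ℤ) + (j : ℤ) - (i : ℤ)))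

/-- `h_ν = ∏ h_{νⱼ}` for a partition `ν`. -/
def hPar (nu : Multiset ℕ+) : SymFn R := (nu.map fun a => hsym (R := R) (a : ℕ)).prod

/-! ### Inner products -/

/-- The `(q,t)`-deformed weight `z_λ(q,t)` attached to the monomial `∏ (X k)^(m k)`,
namely `∏_k (m k)! · k^(m k) · ((1-q^k)/(1-t^k))^(m k)`. -/
def zwtQT (q t : R) (m : ℕ+ →₀ ℕ) : R :=
  ∏ k ∈ m.support,
    ((Nat.factorial (m k) : R) * ((k : ℕ) : R) ^ (m k) *
      ((1 - q ^ (k : ℕ)) / (1 - t ^ (k : ℕ))) ^ (m k))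

/-- The Macdonald inner product `⟨·,·⟩_{q,t}`, defined on the power sum basis by
`⟨p_λ, p_μ⟩_{q,t} = δ_{λμ} z_λ(q,t)`. -/
def innerQT (q t : R) (f g : SymFn R) : R :=
  ∑ m ∈ f.support, MvPolynomial.coeff m f * MvPolynomial.coeff m g * zwtQT q t m

/-- The classical weight `z_λ = ∏_k (m k)! k^(m k)` attached to a monomial. -/
def zwtH (m : ℕ+ →₀ ℕ) : R :=
  ∏ k ∈ m.support, ((Nat.factorial (m k) : R) * ((k : ℕ) : R) ^ (m k))

/-- The standard Hall inner product, `⟨p_λ, p_μ⟩ = δ_{λμ} z_λ`. -/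
def innerH (f g : SymFn R) : R :=
  ∑ m ∈ f.support, MvPolynomial.coeff m f * MvPolynomial.coeff m g * zwtH (R := R) m

/-- The internal (Kronecker) product `⋆`, determined by `p_λ ⋆ p_μ = δ_{λμ} z_λ p_λ`. -/
def star (f g : SymFn R) : SymFn R :=
  ∑ m ∈ f.support,
    MvPolynomial.monomial m (MvPolynomial.coeff m f * MvPolynomial.coeff m g * zwtH (R := R) m)

/-! ### Dominance order and the Macdonald basis -/

/-- Sum of the `k` largest parts of `λ`. -/
def pSum (lam : Multiset ℕ+) (k : ℕ) : ℕ := ((descParts lam).take k).sum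

/-- `μ` is strictly dominated by `λ`: same weight, `μ ≠ λ`, and all partial sums of the
decreasingly sorted parts of `μ` are at most those of `λ`. -/
def StrictDom (mu lam : Multiset ℕ+) : Prop :=
  mu ≠ lam ∧ wt mu = wt lam ∧ ∀ k, pSum mu k ≤ pSum lam k

/-- Characterization of the Macdonald basis `P_λ(x;q,t)` (obtained from the Schur basis by
Gram–Schmidt orthogonalization w.r.t. `⟨·,·⟩_{q,t}`): `P_λ` is unitriangular with respect to
the Schur functions of strictly dominated partitions, and the `P_λ` are pairwise orthogonal. -/
def IsMacdonaldBasis (q t : R) (P : Multiset ℕ+ → SymFn R) : Prop :=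
  (∀ lam, P lam - schur lam ∈
      Submodule.span R ((schur (R := R)) '' {mu | StrictDom mu lam})) ∧
  (∀ lam mu, lam ≠ mu → innerQT q t (P lam) (P mu) = 0)

/-- `Q_λ = P_λ / ⟨P_λ, P_λ⟩_{q,t}`. -/
def Qfam (q t : R) (P : Multiset ℕ+ → SymFn R) (lam : Multiset ℕ+) : SymFn R :=
  (innerQT q t (P lam) (P lam))⁻¹ • P lam

/-- The algebra endomorphism of `Λ_R` rescaling each power sum: `p_k ↦ g k · p_k`. -/
def scaleHom (g : ℕ+ → R) : SymFn R →ₐ[R] SymFn R :=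
  aeval fun k : ℕ+ => (C (g k) * X k : SymFn R)

/-- The modified Macdonald polynomial `Q'_λ(x;q,t) = Q_λ(((1-q)/(1-t))·x; q,t)`,
the image of `Q_λ` under `p_k ↦ ((1-q^k)/(1-t^k))·p_k`. -/
def Qprime (q t : R) (P : Multiset ℕ+ → SymFn R) (lam : Multiset ℕ+) : SymFn R :=
  scaleHom (fun k => (1 - q ^ (k : ℕ)) / (1 - t ^ (k : ℕ))) (Qfam q t P lam)

/-! ### Plethysm -/

/-- Plethysm by the power sum on the left: `p_l ∘ f`, the ring endomorphism `p_k ↦ p_{lk}`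
applied to `f`. -/
def plethP (l : ℕ+) : SymFn R →ₐ[R] SymFn R :=
  aeval fun k : ℕ+ => (X (l * k) : SymFn R)

/-- General plethysm `g ∘ f`: the algebra homomorphism in `g` sending `p_k` to `p_k ∘ f`. -/
def pleth (g f : SymFn R) : SymFn R :=
  aeval (fun k : ℕ+ => plethP k f) g

/-! ### Cells of a partition: arms, legs, the constants `c_μ`, `c'_μ` and `n(μ)` -/

/-- Arm length of the (0-indexed) cell `(i,j)` of `λ`: `λ_i - j - 1`. -/
def armM (lam : Multiset ℕ+) (i j : ℕ) : ℕ := (descParts lam).getD i 0 - (j + 1)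

/-- Leg length of the (0-indexed) cell `(i,j)` of `λ`: the number of cells below it
in the same column. -/
def legM (lam : Multiset ℕ+) (i j : ℕ) : ℕ :=
  ((List.range (descParts lam).length).filter
    (fun i' => decide (i < i') && decide (j < (descParts lam).getD i' 0))).length

/-- Product of a quantity over all cells of the partition `λ`. -/
def cellProd {S : Type} [CommMonoid S] (lam : Multiset ℕ+) (f : ℕ → ℕ → S) : S :=
  ∏ i ∈ Finset.range (descParts lam).length,
    ∏ j ∈ Finset.range ((descParts lam).getD i 0), f i j

/-- `c_μ(q,t) = ∏_{s∈μ} (1 - q^{a(s)} t^{l(s)+1})`. -/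
def cLow (q t : R) (lam : Multiset ℕ+) : R :=
  cellProd lam fun i j => 1 - q ^ (armM lam i j) * t ^ (legM lam i j + 1)

/-- `c'_μ(q,t) = ∏_{s∈μ} (1 - q^{a(s)+1} t^{l(s)})`. -/
def cUp (q t : R) (lam : Multiset ℕ+) : R :=
  cellProd lam fun i j => 1 - q ^ (armM lam i j + 1) * t ^ (legM lam i j)

/-- `n(λ) = ∑ (i-1)·λ_i`. -/
def nInv (lam : Multiset ℕ+) : ℕ :=
  ∑ i ∈ Finset.range (descParts lam).length, i * (descParts lam).getD i 0

/-- The modified Macdonald polynomial of Haglund–Haiman–Loehr,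
`H̃_μ(x;q,t) = t^{n(μ)} J_μ(x/(1-t⁻¹); q, t⁻¹)`, where `J_μ(x;q,t) = c_μ(q,t) P_μ(x;q,t)`
and `Pinv` is the Macdonald basis at parameters `(q, t⁻¹)`. -/
def Htilde (q t : R) (Pinv : Multiset ℕ+ → SymFn R) (lam : Multiset ℕ+) : SymFn R :=
  C (t ^ nInv lam) *
    scaleHom (fun k => (1 - (t⁻¹) ^ (k : ℕ))⁻¹) (C (cLow q t⁻¹ lam) * Pinv lam)

/-! ### Cyclic characters -/

/-- The Ramanujan (Von Sterneck) sum `c(j,d)`: the sum of the `j`-th powers of the primitive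
`d`-th roots of unity (computed in the domain `R`). -/
def cRam [IsDomain R] (j d : ℕ) : R := ∑ z ∈ primitiveRoots d R, z ^ j

/-- The Frobenius characteristic `l_k^{(j)} = (1/k) ∑_{d ∣ k} c(j,d) p_d^{k/d}` of the
representation of `S_k` induced from the `j`-th character of the cyclic subgroup generated
by a `k`-cycle. -/
def lchar [IsDomain R] (k j : ℕ) : SymFn R :=
  ((k : R))⁻¹ • ∑ d ∈ Nat.divisors k, (cRam (R := R) j d) • ((pN (R := R) d) ^ (k / d))

end Core

/-! ### Specialization `t = ζ` and evaluation maps -/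

/-- Evaluation of a rational function in `t` over `ℂ(q)` at a point `c : ℂ(q)`. -/
def evalT (c : KK) (x : FF) : KK := RatFunc.eval (RingHom.id KK) c x

/-- Coefficientwise specialization `t = c` of a symmetric function over `ℂ(q,t)`. -/
def specT (c : KK) (f : SymFn FF) : SymFn KK :=
  ∑ m ∈ f.support, MvPolynomial.monomial m (evalT c (MvPolynomial.coeff m f))

/-- Evaluation `f ↦ f(1, ζ, ζ², …, ζ^{l-1}; q, ζ)`: substitute the finite alphabet
`x_i = ζ^{i-1}` (`1 ≤ i ≤ l`) and then specialize `t = ζ`. -/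
def macEvalRoots (l : ℕ) (z : ℂ) (f : SymFn FF) : KK :=
  evalT (RatFunc.C z)
    ((aeval fun k : ℕ+ =>
        ∑ i ∈ Finset.range l, (RatFunc.C (RatFunc.C z) : FF) ^ (i * (k : ℕ))) f)

/-- Evaluation of a symmetric function over `ℂ(q,t)` at the finite alphabet
`(1, t, t², …, t^{l-1})`. -/
def evalAlphT (l : ℕ) : SymFn FF →ₐ[FF] FF :=
  aeval fun k : ℕ+ => ∑ i ∈ Finset.range l, tF ^ (i * (k : ℕ))

/-- Congruence to `0` modulo the cyclotomic polynomial `Φ_l(t)` for a rational function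
in `t`: `x = Φ_l(t) · (a/b)` with `b` coprime to `Φ_l`. -/
def CongrModPhi (l : ℕ) (x : FF) : Prop :=
  ∃ a b : Polynomial KK, IsCoprime b (Polynomial.cyclotomic l KK) ∧
    x = algebraMap (Polynomial KK) FF (Polynomial.cyclotomic l KK) *
      (algebraMap (Polynomial KK) FF a / algebraMap (Polynomial KK) FF b)

/-- The finite set of all partitions of `n`, as multisets of positive integers. -/
def partitionsOf (n : ℕ) : Finset (Multiset ℕ+) :=
  Finset.univ.image fun pi : Nat.Partition n =>
    pi.parts.attach.map fun a => (⟨a.1, pi.parts_pos a.2⟩ : ℕ+)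

end MacdonaldPreliminaries

noncomputable section

open MvPolynomial

/-!
`Q'_(r^l)` is `h_(r^l)` plus a combination of the `h_ν` for the other partitions `ν` of `l r` with
at most `l` parts, and it is orthogonal to all of these `h_ν` for the form in which
`⟨p_k, p_k⟩ = k (1 - t^k) / (1 - q^k)`. At `t = ζ` the power sums `p_(lk)` generate the radical of
this form. So `(-1)^((l-1)r) p_l ∘ h_r` is orthogonal to everything, and it is of the same shape
`h_(r^l) + ⋯`: it is read off from `∏_i H(ζ^i z) = ∑_n (p_l ∘ h_n) z^(ln)`, where `H` is the
generating series of the `h_n`.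

Cramer's rule determines such an element as soon as the Gram determinant of those `h_ν` is nonzero
at `t = ζ`. Letting `q → ζ`, the weight of `p_k` becomes `k` if `l ∤ k` and `0` if `l ∣ k`. This
limit form is defined over `ℚ` and positive definite modulo the `p_(lk)`, so it remains that the
`h_ν` are linearly independent there. All these `ν` have multiplicities below `l`, and by Glaisher's
theorem the `h_ν` with this property form a basis modulo the `p_(lk)`.
-/

namespace SymFn

section Alphabet

open PowerSeries (coeff_mk coeff_derivative)

/-- The complete homogeneous symmetric function `h_n` evaluated at the (virtual) alphabet whose
power sums are `c 1, c 2, …`.  Taking the universal `h_n` over `ℚ` makes sense of it in any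
`ℚ`-algebra, whereas `hsym` needs a field. -/
def hAt {S : Type*} [CommRing S] [Algebra ℚ S] (c : ℕ+ → S) (n : ℕ) : S :=
  aeval c (hsym (R := ℚ) n)

/-- `h_z` at an alphabet for an integer index, with `h_z = 0` for `z < 0`. -/
def hAtInt {S : Type*} [CommRing S] [Algebra ℚ S] (c : ℕ+ → S) (z : ℤ) : S :=
  if 0 ≤ z then hAt c z.toNat else 0

/-- The generating series `∑ h_n zⁿ` at an alphabet. -/
def hSeries {S : Type*} [CommRing S] [Algebra ℚ S] (c : ℕ+ → S) : PowerSeries S :=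
  PowerSeries.mk (hAt c)

/-- The generating series `∑ p_{n+1} zⁿ` of the power sums of an alphabet, i.e. the logarithmic
derivative of `hSeries`. -/
def pSeries {S : Type*} (c : ℕ+ → S) : PowerSeries S :=
  PowerSeries.mk fun n => c n.succPNat

lemma eq_of_derivative_eq_mul {S : Type*} [CommRing S] [IsAddTorsionFree S] {P F G : PowerSeries S}
    (hF : PowerSeries.derivative S F = P * F) (hG : PowerSeries.derivative S G = P * G)
    (h0 : PowerSeries.constantCoeff F = PowerSeries.constantCoeff G) : F = G := by
  ext n
  induction n using Nat.strong_induction_on with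
  | _ n ih =>
    cases n with
    | zero => simpa using h0
    | succ n =>
      have hFn := congrArg (PowerSeries.coeff n) hF
      have hGn := congrArg (PowerSeries.coeff n) hG
      rw [coeff_derivative, PowerSeries.coeff_mul] at hFn hGn
      refine nsmul_right_injective n.succ_ne_zero ?_
      simp only [nsmul_eq_mul, Nat.cast_succ]
      rw [mul_comm, hFn, mul_comm _ (PowerSeries.coeff _ G), hGn]
      exact Finset.sum_congr rfl fun i hi => by
        rw [ih _ (Nat.lt_succ_of_le (Finset.HasAntidiagonal.antidiagonal.snd_le hi))]

lemma succ_mul_hsym_succ {R : Type} [Field R] [CharZero R] (n : ℕ) :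
    ((n : SymFn R) + 1) * hsym (n + 1) =
      ∑ i ∈ Finset.range (n + 1), X i.succPNat * hsym (R := R) (n - i) := by
  have hn : C ((n : R) + 1) = ((n : SymFn R) + 1) := by simp
  rw [hsym, ← hn, ← smul_eq_C_mul, smul_smul, mul_inv_cancel₀ n.cast_add_one_ne_zero, one_smul]
  rfl

variable {S S' : Type*} [CommRing S] [Algebra ℚ S] [CommRing S'] [Algebra ℚ S']

@[simp] lemma hAt_zero (c : ℕ+ → S) : hAt c 0 = 1 := by
  rw [hAt, hsym, map_one]

lemma succ_mul_hAt_succ (c : ℕ+ → S) (n : ℕ) :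
    ((n : S) + 1) * hAt c (n + 1) = ∑ i ∈ Finset.range (n + 1), c i.succPNat * hAt c (n - i) := by
  simpa [hAt] using congrArg (aeval c) (succ_mul_hsym_succ (R := ℚ) n)

lemma map_hAt (f : S →+* S') (c : ℕ+ → S) (n : ℕ) : f (hAt c n) = hAt (fun k => f (c k)) n :=
  comp_aeval_apply c f.toRatAlgHom _

lemma constantCoeff_hSeries (c : ℕ+ → S) : PowerSeries.constantCoeff (hSeries c) = 1 := by
  rw [← PowerSeries.coeff_zero_eq_constantCoeff_apply, hSeries, coeff_mk, hAt_zero]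

lemma derivative_hSeries (c : ℕ+ → S) :
    PowerSeries.derivative S (hSeries c) = pSeries c * hSeries c := by
  ext n
  rw [coeff_derivative, PowerSeries.coeff_mul, Finset.Nat.sum_antidiagonal_eq_sum_range_succ_mk,
    mul_comm]
  simpa only [hSeries, pSeries, coeff_mk] using succ_mul_hAt_succ c n

lemma eq_hSeries {c : ℕ+ → S} {F : PowerSeries S}
    (h : PowerSeries.derivative S F = pSeries c * F) (h0 : PowerSeries.constantCoeff F = 1) :
    F = hSeries c :=
  haveI := IsAddTorsionFree.of_module_rat S
  eq_of_derivative_eq_mul h (derivative_hSeries c) (by rw [h0, constantCoeff_hSeries])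

lemma hsym_eq_hAt {R : Type} [Field R] [CharZero R] (n : ℕ) : hsym (R := R) n = hAt X n := by
  suffices PowerSeries.mk (hsym (R := R)) = hSeries X by
    simpa [hSeries] using congrArg (PowerSeries.coeff n) this
  refine eq_hSeries ?_ (by simp [← PowerSeries.coeff_zero_eq_constantCoeff_apply, hsym])
  ext1 n
  rw [coeff_derivative, PowerSeries.coeff_mul, Finset.Nat.sum_antidiagonal_eq_sum_range_succ_mk,
    mul_comm]
  simpa only [pSeries, coeff_mk] using succ_mul_hsym_succ n

lemma hInt_eq_hAtInt {R : Type} [Field R] [CharZero R] (z : ℤ) :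
    hInt (R := R) z = hAtInt X z := by
  simp only [hInt, hAtInt, hsym_eq_hAt]

@[simp] lemma hAtInt_natCast (c : ℕ+ → S) (n : ℕ) : hAtInt c n = hAt c n := by
  simp [hAtInt]

lemma hAtInt_of_neg (c : ℕ+ → S) {z : ℤ} (hz : z < 0) : hAtInt c z = 0 :=
  if_neg hz.not_ge

lemma map_hAtInt (f : S →+* S') (c : ℕ+ → S) (z : ℤ) :
    f (hAtInt c z) = hAtInt (fun k => f (c k)) z := by
  simp only [hAtInt, apply_ite f, map_hAt, map_zero]

lemma hSeries_add (c d : ℕ+ → S) : hSeries (c + d) = hSeries c * hSeries d := by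
  refine (eq_hSeries ?_ (by simp [constantCoeff_hSeries])).symm
  have hp : pSeries (c + d) = pSeries c + pSeries d := by
    ext n
    simp [pSeries]
  rw [Derivation.leibniz, derivative_hSeries, derivative_hSeries, hp, smul_eq_mul, smul_eq_mul]
  ring

lemma hSeries_zero : hSeries (0 : ℕ+ → S) = 1 := by
  refine (eq_hSeries ?_ (map_one _)).symm
  have hp : pSeries (0 : ℕ+ → S) = 0 := by
    ext n
    simp [pSeries]
  rw [hp, zero_mul, Derivation.map_one_eq_zero]

lemma hSeries_sum {ι : Type*} (s : Finset ι) (c : ι → ℕ+ → S) :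
    hSeries (∑ i ∈ s, c i) = ∏ i ∈ s, hSeries (c i) := by
  classical
  induction s using Finset.induction_on with
  | empty => simp [hSeries_zero]
  | insert i s hi ih => rw [Finset.sum_insert hi, Finset.prod_insert hi, hSeries_add, ih]

lemma hAt_sum {ι : Type*} [DecidableEq ι] (s : Finset ι) (c : ι → ℕ+ → S) (n : ℕ) :
    hAt (∑ i ∈ s, c i) n = ∑ d ∈ s.finsuppAntidiag n, ∏ i ∈ s, hAt (c i) (d i) := by
  have h := congrArg (PowerSeries.coeff n) (hSeries_sum s c)
  rw [PowerSeries.coeff_prod] at h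
  simpa only [hSeries, coeff_mk] using h

lemma hAt_pow_mul (a : S) (c : ℕ+ → S) (n : ℕ) :
    hAt (fun k => a ^ (k : ℕ) * c k) n = a ^ n * hAt c n := by
  suffices PowerSeries.rescale a (hSeries c) = hSeries fun k => a ^ (k : ℕ) * c k by
    simpa [hSeries] using (congrArg (PowerSeries.coeff n) this).symm
  refine eq_hSeries ?_ ?_
  · ext n
    have h := congrArg (fun x => a ^ (n + 1) * PowerSeries.coeff n x) (derivative_hSeries c)
    simp only [coeff_derivative, PowerSeries.coeff_mul, PowerSeries.coeff_rescale, Finset.mul_sum,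
      pSeries, coeff_mk, Nat.succPNat_coe, ← mul_assoc] at h ⊢
    refine h.trans (Finset.sum_congr rfl fun ij hij => ?_)
    rw [← Finset.HasAntidiagonal.mem_antidiagonal.mp hij, Nat.succ_eq_add_one]
    ring
  · rw [← PowerSeries.coeff_zero_eq_constantCoeff_apply, PowerSeries.coeff_rescale, pow_zero,
      one_mul, PowerSeries.coeff_zero_eq_constantCoeff_apply, constantCoeff_hSeries]

lemma hAt_one (n : ℕ) : hAt (1 : ℕ+ → S) n = 1 := by
  suffices (PowerSeries.mk 1 : PowerSeries S) = hSeries 1 by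
    simpa [hSeries] using (congrArg (PowerSeries.coeff n) this).symm
  refine eq_hSeries ?_ (by simp [← PowerSeries.coeff_zero_eq_constantCoeff_apply])
  ext n
  simp [coeff_derivative, PowerSeries.coeff_mul, pSeries]

lemma hAt_pow (a : S) (n : ℕ) : hAt (fun k : ℕ+ => a ^ (k : ℕ)) n = a ^ n := by
  simpa [hAt_one] using hAt_pow_mul a 1 n

end Alphabet

section Form

variable {R : Type} [CommRing R]

/-- The squared norm `∏ k, (m k)! * κ k ^ m k` of the power sum monomial with exponents `m` in the
form `zForm κ`. -/
def zWeight (κ : ℕ+ → R) (m : ℕ+ →₀ ℕ) : R :=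
  m.prod fun k e => e.factorial * κ k ^ e

/-- The diagonal bilinear form for which the power sum monomials are orthogonal and
`p_k ^ e` has squared norm `e! * κ k ^ e`.  The Hall inner product is `κ k = k` and the Macdonald
inner product is `κ k = k * (1 - q ^ k) / (1 - t ^ k)`. -/
def zForm (κ : ℕ+ → R) : SymFn R →ₗ[R] SymFn R →ₗ[R] R :=
  (basisMonomials ℕ+ R).constr R fun m => zWeight κ m • lcoeff R m

lemma zForm_monomial (κ : ℕ+ → R) (m : ℕ+ →₀ ℕ) (g : SymFn R) :
    zForm κ (monomial m 1) g = zWeight κ m * coeff m g := by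
  have h := (basisMonomials ℕ+ R).constr_basis R (fun m => zWeight κ m • lcoeff R m) m
  rw [coe_basisMonomials] at h
  rw [zForm, h]
  rfl

lemma zForm_apply (κ : ℕ+ → R) (f g : SymFn R) :
    zForm κ f g = ∑ m ∈ f.support, coeff m f * coeff m g * zWeight κ m := by
  conv_lhs => rw [f.as_sum]
  rw [map_sum, LinearMap.sum_apply]
  refine Finset.sum_congr rfl fun m _ => ?_
  rw [← mul_one (coeff m f), ← smul_eq_mul, ← smul_monomial, map_smul, LinearMap.smul_apply,
    zForm_monomial, smul_eq_mul, smul_eq_mul]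
  ring

lemma zForm_comm (κ : ℕ+ → R) (f g : SymFn R) : zForm κ f g = zForm κ g f := by
  suffices zForm κ = (zForm κ).flip from congr($this f g)
  refine (basisMonomials ℕ+ R).ext fun m => (basisMonomials ℕ+ R).ext fun m' => ?_
  simp only [coe_basisMonomials, LinearMap.flip_apply, zForm_monomial, coeff_monomial]
  split_ifs with h₁ h₂ h₂ <;> simp_all

lemma zWeight_add_single (κ : ℕ+ → R) (m : ℕ+ →₀ ℕ) (k : ℕ+) :
    zWeight κ (m + Finsupp.single k 1) = κ k * (m k + 1) * zWeight κ m := by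
  have hm (n : ℕ+ →₀ ℕ) := n.mul_prod_erase' k (fun k e => (e.factorial : R) * κ k ^ e) (by simp)
  rw [zWeight, zWeight, ← hm, ← hm m, Finsupp.erase_add, Finsupp.erase_single, add_zero]
  simp only [Finsupp.add_apply, Finsupp.single_eq_same, Nat.factorial_succ, pow_succ]
  push_cast
  ring

lemma zForm_X_mul (κ : ℕ+ → R) (k : ℕ+) (f g : SymFn R) :
    zForm κ (X k * f) g = κ k * zForm κ f (pderiv k g) := by
  suffices (zForm κ).flip g ∘ₗ LinearMap.mulLeft R (X k) =
      κ k • (zForm κ).flip (pderiv k g) from congr($this f)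
  refine (basisMonomials ℕ+ R).ext fun m => ?_
  simp only [coe_basisMonomials, LinearMap.comp_apply, LinearMap.mulLeft_apply,
    LinearMap.smul_apply, LinearMap.flip_apply, smul_eq_mul]
  rw [X, monomial_mul, one_mul, add_comm, zForm_monomial, zForm_monomial, zWeight_add_single,
    coeff_pderiv]
  ring

lemma map_zForm {S : Type} [CommRing S] (φ : R →+* S) (κ : ℕ+ → R) (f g : SymFn R) :
    φ (zForm κ f g) = zForm (fun k => φ (κ k)) (map φ f) (map φ g) := by
  have hw : ∀ m, zWeight (fun k => φ (κ k)) m = φ (zWeight κ m) := fun m => by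
    simp [zWeight, Finsupp.prod, map_prod]
  rw [zForm_apply, zForm_apply, map_sum]
  rw [Finset.sum_subset (support_map_subset φ f) fun m _ hm => by
    rw [notMem_support_iff.mp hm, zero_mul, zero_mul]]
  simp only [coeff_map, hw, map_mul]

end Form

section Scale

variable {R : Type} [Field R]

lemma coeff_scaleHom (c : ℕ+ → R) (g : SymFn R) (m : ℕ+ →₀ ℕ) :
    coeff m (scaleHom c g) = (m.prod fun k e => c k ^ e) * coeff m g := by
  suffices lcoeff R m ∘ₗ (scaleHom c).toLinearMap = (m.prod fun k e => c k ^ e) • lcoeff R m from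
    congr($this g)
  refine (basisMonomials ℕ+ R).ext fun m' => ?_
  have h : scaleHom c (monomial m' 1) = C (m'.prod fun k e => c k ^ e) * monomial m' 1 := by
    rw [scaleHom, aeval_monomial, map_one, one_mul, monomial_eq, map_one, one_mul, Finsupp.prod,
      Finsupp.prod, Finsupp.prod, map_prod, ← Finset.prod_mul_distrib]
    simp only [mul_pow, map_pow]
  simp only [coe_basisMonomials, LinearMap.comp_apply, AlgHom.toLinearMap_apply, lcoeff_apply,
    LinearMap.smul_apply, smul_eq_mul, h, coeff_C_mul, coeff_monomial]
  split_ifs with heq <;> simp [heq]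

lemma zForm_scaleHom (κ c : ℕ+ → R) (f g : SymFn R) :
    zForm κ f (scaleHom c g) = zForm (fun k => c k * κ k) f g := by
  rw [zForm_apply, zForm_apply]
  refine Finset.sum_congr rfl fun m _ => ?_
  have : zWeight (fun k => c k * κ k) m = (m.prod fun k e => c k ^ e) * zWeight κ m := by
    rw [zWeight, zWeight, ← Finsupp.prod_mul]
    exact Finsupp.prod_congr fun k _ => by rw [mul_pow]; ring
  rw [coeff_scaleHom, this]
  ring

lemma innerQT_eq_zForm (q t : R) (f g : SymFn R) :
    innerQT q t f g = zForm (fun k => (1 - q ^ (k : ℕ)) / (1 - t ^ (k : ℕ)) * (k : ℕ)) f g := by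
  rw [zForm_apply]
  refine Finset.sum_congr rfl fun m _ => congrArg _ (Finset.prod_congr rfl fun k _ => ?_)
  dsimp only
  rw [mul_pow]
  ring

end Scale

lemma eq_zero_of_zForm_self_eq_zero {R : Type} [Field R] [LinearOrder R] [IsStrictOrderedRing R]
    {κ : ℕ+ → R} (hκ : ∀ k, 0 < κ k) {f : SymFn R} (h : zForm κ f f = 0) : f = 0 := by
  have hw : ∀ m, 0 < zWeight κ m := fun m => Finset.prod_pos fun k _ =>
    mul_pos (Nat.cast_pos.mpr (Nat.factorial_pos _)) (pow_pos (hκ k) _)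
  rw [zForm_apply, Finset.sum_eq_zero_iff_of_nonneg fun m _ =>
    mul_nonneg (mul_self_nonneg _) (hw m).le] at h
  ext m
  by_contra hm
  exact mul_ne_zero (mul_self_ne_zero.mpr hm) (hw m).ne' (h m (mem_support_iff.mpr hm))

section Dominance

/-- The `i`-th largest part of a partition, counting from `0` and padded by zeros. -/
def part (mu : Multiset ℕ+) (i : ℕ) : ℕ := (descParts mu).getD i 0

/-- The dominance order on partitions of the same weight. -/
def DomLE (mu lam : Multiset ℕ+) : Prop :=
  wt mu = wt lam ∧ ∀ k, pSum mu k ≤ pSum lam k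

lemma DomLE.refl (mu : Multiset ℕ+) : DomLE mu mu := ⟨rfl, fun _ => le_rfl⟩

lemma DomLE.trans {mu nu lam : Multiset ℕ+} (h : DomLE mu nu) (h' : DomLE nu lam) :
    DomLE mu lam :=
  ⟨h.1.trans h'.1, fun k => (h.2 k).trans (h'.2 k)⟩

lemma coe_descParts (mu : Multiset ℕ+) :
    (descParts mu : Multiset ℕ) = mu.map fun a : ℕ+ => (a : ℕ) := by
  rw [descParts, ← Multiset.coe_reverse, List.reverse_reverse, Multiset.sort_eq]

lemma length_descParts (mu : Multiset ℕ+) : (descParts mu).length = Multiset.card mu := by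
  simpa using congrArg Multiset.card (coe_descParts mu)

lemma part_of_card_le {mu : Multiset ℕ+} {i : ℕ} (h : Multiset.card mu ≤ i) : part mu i = 0 :=
  List.getD_eq_default _ _ (by rwa [length_descParts])

lemma part_of_lt_card {mu : Multiset ℕ+} {i : ℕ} (h : i < Multiset.card mu) :
    part mu i = (descParts mu)[i]'(by rwa [length_descParts]) :=
  List.getD_eq_getElem _ _ _

lemma exists_part_eq {mu : Multiset ℕ+} {i : ℕ} (h : i < Multiset.card mu) :
    ∃ a ∈ mu, part mu i = a := by
  have hmem : part mu i ∈ (descParts mu : Multiset ℕ) := by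
    rw [part_of_lt_card h]
    exact List.getElem_mem _
  rw [coe_descParts, Multiset.mem_map] at hmem
  exact hmem.imp fun a ha => ⟨ha.1, ha.2.symm⟩

lemma exists_eq_part {mu : Multiset ℕ+} {a : ℕ+} (h : a ∈ mu) : ∃ i, part mu i = a := by
  have hmem : (a : ℕ) ∈ (descParts mu : Multiset ℕ) := by
    rw [coe_descParts]
    exact Multiset.mem_map_of_mem _ h
  obtain ⟨i, hi, hia⟩ := List.getElem_of_mem hmem
  exact ⟨i, by rw [part_of_lt_card (by rwa [← length_descParts]), hia]⟩

lemma part_eq_zero_iff {mu : Multiset ℕ+} {i : ℕ} : part mu i = 0 ↔ Multiset.card mu ≤ i := by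
  refine ⟨fun h => not_lt.mp fun hi => ?_, part_of_card_le⟩
  obtain ⟨a, -, ha⟩ := exists_part_eq hi
  exact a.ne_zero (ha.symm.trans h)

lemma antitone_part (mu : Multiset ℕ+) : Antitone (part mu) := by
  intro i j hij
  rcases lt_or_ge j (Multiset.card mu) with hj | hj
  · have hs : (descParts mu).Pairwise (· ≥ ·) := by
      rw [descParts, List.pairwise_reverse]
      exact Multiset.pairwise_sort _ _
    rw [part_of_lt_card hj, part_of_lt_card (hij.trans_lt hj)]
    exact hs.rel_get_of_le (a := ⟨i, _⟩) (b := ⟨j, _⟩) hij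
  · rw [part_of_card_le hj]
    exact Nat.zero_le _

lemma list_prod_map_eq_prod_range {S : Type*} [CommMonoid S] {f : ℕ → S} (h0 : f 0 = 1)
    {L : List ℕ} {M : ℕ} (hM : L.length ≤ M) :
    (L.map f).prod = ∏ i ∈ Finset.range M, f (L.getD i 0) := by
  induction L generalizing M with
  | nil => simp [h0]
  | cons a L ih =>
    obtain ⟨M, rfl⟩ := Nat.exists_eq_succ_of_ne_zero (Nat.ne_zero_of_lt hM)
    simp [Finset.prod_range_succ', ih (Nat.le_of_succ_le_succ hM), mul_comm]

lemma prod_map_eq_prod_range_part {S : Type*} [CommMonoid S] {f : ℕ → S} (h0 : f 0 = 1)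
    {mu : Multiset ℕ+} {M : ℕ} (hM : Multiset.card mu ≤ M) :
    (mu.map fun a : ℕ+ => f a).prod = ∏ i ∈ Finset.range M, f (part mu i) := by
  have hmap : mu.map (fun a : ℕ+ => f a) = (descParts mu).map f := by
    rw [← Multiset.map_coe, coe_descParts, Multiset.map_map]
    rfl
  rw [hmap, Multiset.prod_coe]
  exact list_prod_map_eq_prod_range h0 (by rwa [length_descParts])

lemma pSum_eq_sum_part (mu : Multiset ℕ+) (k : ℕ) :
    pSum mu k = ∑ i ∈ Finset.range k, part mu i := by
  have h : ∀ L : List ℕ, (L.take k).sum = ∑ i ∈ Finset.range k, L.getD i 0 := fun L => by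
    induction L generalizing k with
    | nil => simp
    | cons a L ih =>
      cases k with
      | zero => simp
      | succ k => simp [Finset.sum_range_succ', ih, add_comm]
  exact h _

lemma pSum_eq_wt {mu : Multiset ℕ+} {k : ℕ} (h : Multiset.card mu ≤ k) : pSum mu k = wt mu := by
  rw [pSum, List.take_of_length_le (by rwa [length_descParts]), wt, ← coe_descParts,
    Multiset.sum_coe]

lemma pSum_le_wt (mu : Multiset ℕ+) (k : ℕ) : pSum mu k ≤ wt mu := by
  rw [← pSum_eq_wt (le_max_right k (Multiset.card mu)), pSum_eq_sum_part, pSum_eq_sum_part]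
  exact Finset.sum_le_sum_of_subset (Finset.range_mono (le_max_left _ _))

lemma pSum_injective : Function.Injective pSum := by
  intro mu nu h
  have hpart : part mu = part nu := by
    ext i
    have hi := congr($h (i + 1))
    rw [pSum_eq_sum_part, pSum_eq_sum_part, Finset.sum_range_succ, Finset.sum_range_succ,
      ← pSum_eq_sum_part, ← pSum_eq_sum_part, h] at hi
    exact Nat.add_left_cancel hi
  have hcard : Multiset.card mu = Multiset.card nu := eq_of_forall_ge_iff fun i => by
    rw [← part_eq_zero_iff, ← part_eq_zero_iff, hpart]
  refine Multiset.map_injective PNat.coe_injective ?_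
  change mu.map (fun a : ℕ+ => (a : ℕ)) = nu.map fun a : ℕ+ => (a : ℕ)
  rw [← coe_descParts, ← coe_descParts]
  refine congrArg _ (List.ext_getElem (by rw [length_descParts, length_descParts, hcard]) ?_)
  intro i hi hi'
  rw [← part_of_lt_card (by rwa [← length_descParts]),
    ← part_of_lt_card (by rwa [← length_descParts]), hpart]

lemma DomLE.antisymm {mu nu : Multiset ℕ+} (h : DomLE mu nu) (h' : DomLE nu mu) : mu = nu :=
  pSum_injective (funext fun k => (h.2 k).antisymm (h'.2 k))

lemma wt_replicate (l : ℕ) (a : ℕ+) : wt (Multiset.replicate l a) = l * a := by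
  rw [wt, Multiset.map_replicate, Multiset.sum_replicate, smul_eq_mul]

lemma card_le_of_replicate_domLE {l : ℕ} {a : ℕ+} {mu : Multiset ℕ+}
    (h : DomLE (Multiset.replicate l a) mu) : Multiset.card mu ≤ l := by
  have hl := h.2 l
  rw [pSum_eq_wt (Multiset.card_replicate l a).le, h.1] at hl
  have hl' := pSum_le_wt mu (l + 1)
  rw [pSum_eq_sum_part, Finset.sum_range_succ, ← pSum_eq_sum_part] at hl'
  exact part_eq_zero_iff.mp (by omega)

lemma eq_replicate_of_domLE {l : ℕ} {a : ℕ+} {mu : Multiset ℕ+} (hl : Multiset.card mu ≤ l)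
    (h : DomLE mu (Multiset.replicate l a)) : mu = Multiset.replicate l a := by
  have hle : ∀ i, part mu i ≤ a := fun i => by
    have h0 : ∀ nu, pSum nu 1 = part nu 0 := fun nu => by
      rw [pSum_eq_sum_part, Finset.sum_range_one]
    refine (antitone_part mu i.zero_le).trans ?_
    rw [← h0]
    refine (h.2 1).trans ?_
    rw [h0]
    rcases Nat.eq_zero_or_pos (Multiset.card (Multiset.replicate l a)) with hc | hc
    · rw [part_of_card_le hc.le]
      exact Nat.zero_le _
    · obtain ⟨b, hb, hb'⟩ := exists_part_eq hc
      rw [hb', Multiset.eq_of_mem_replicate hb]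
  have hsum : ∑ i ∈ Finset.range l, part mu i = ∑ _i ∈ Finset.range l, (a : ℕ) := by
    rw [← pSum_eq_sum_part, pSum_eq_wt hl, h.1, wt_replicate, Finset.sum_const, Finset.card_range,
      smul_eq_mul]
  rw [Finset.sum_eq_sum_iff_of_le fun i _ => hle i] at hsum
  refine Multiset.eq_replicate.mpr ⟨hl.antisymm (not_lt.mp fun hlt => ?_), fun b hb => ?_⟩
  · exact a.ne_zero ((hsum _ (Finset.mem_range.mpr hlt)).symm.trans (part_of_card_le le_rfl))
  · obtain ⟨i, hi⟩ := exists_eq_part hb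
    have hil : i < l := not_le.mp fun hli =>
      b.ne_zero (hi.symm.trans (part_of_card_le (hl.trans hli)))
    exact PNat.coe_injective (hi.symm.trans (hsum i (Finset.mem_range.mpr hil)))

end Dominance

section HallCoeff

variable {R : Type} [CommRing R]

/-- The Hall inner product `⟨p_λ, p_μ⟩ = δ_{λμ} z_λ`. -/
def hallForm : SymFn R →ₗ[R] SymFn R →ₗ[R] R :=
  zForm fun k => (k : ℕ)

lemma intCast_mul_hAtInt {S : Type*} [CommRing S] [Algebra ℚ S] (c : ℕ+ → S) {z : ℤ} {N : ℕ}
    (hN : z ≤ N) :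
    (z : S) * hAtInt c z = ∑ i ∈ Finset.range N, c i.succPNat * hAtInt c (z - (i + 1)) := by
  rcases le_or_gt z 0 with hz | hz
  · rw [Finset.sum_eq_zero fun i _ => by rw [hAtInt_of_neg c (by omega), mul_zero]]
    rcases hz.eq_or_lt with rfl | hz
    · rw [Int.cast_zero, zero_mul]
    · rw [hAtInt_of_neg c hz, mul_zero]
  · obtain ⟨n, rfl⟩ : ∃ n : ℕ, z = (n + 1 : ℕ) := ⟨z.toNat - 1, by omega⟩
    have hsub : Finset.range (n + 1) ⊆ Finset.range N := Finset.range_mono (by exact_mod_cast hN)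
    rw [← Finset.sum_subset hsub fun i _ hi => by
      rw [hAtInt_of_neg c (by have := Finset.mem_range.not.mp hi; omega), mul_zero],
      hAtInt_natCast, Int.cast_natCast, Nat.cast_add_one, succ_mul_hAt_succ]
    refine Finset.sum_congr rfl fun i hi => ?_
    rw [show ((n + 1 : ℕ) : ℤ) - (i + 1) = (n - i : ℕ) by have := Finset.mem_range.mp hi; omega,
      hAtInt_natCast]

lemma derivation_prod {A : Type*} [CommRing A] [Algebra R A] {ι : Type*} [DecidableEq ι]
    (D : Derivation R A A) (s : Finset ι) (f : ι → A) :
    D (∏ i ∈ s, f i) = ∑ i ∈ s, D (f i) * ∏ j ∈ s.erase i, f j := by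
  induction s using Finset.induction_on with
  | empty => simp
  | insert i s hi ih =>
    rw [Finset.prod_insert hi, D.leibniz, ih, Finset.sum_insert hi, Finset.erase_insert hi,
      add_comm, smul_eq_mul, smul_eq_mul, mul_comm (∏ j ∈ s, f j), Finset.mul_sum]
    refine congrArg _ (Finset.sum_congr rfl fun j hj => ?_)
    rw [Finset.erase_insert_of_ne (ne_of_mem_of_not_mem hj hi).symm,
      Finset.prod_insert fun h => hi (Finset.mem_of_mem_erase h)]
    ring

lemma sum_mul_pderiv_X_mul {k : ℕ+} {N : ℕ} (hk : k ≤ N) (g : ℕ → SymFn R) :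
    ∑ i ∈ Finset.range N, ((k : ℕ) : SymFn R) * pderiv k (X i.succPNat) * g i =
      k * g k.natPred := by
  rw [Finset.sum_eq_single k.natPred]
  · rw [PNat.succPNat_natPred, pderiv_X_self, mul_one]
  · intro i _ hi
    rw [pderiv_X_of_ne fun h => hi (by rw [← h, Nat.natPred_succPNat]), mul_zero, zero_mul]
  · exact fun h => absurd (Finset.mem_range.mpr (by have := k.natPred_add_one; omega)) h

variable [Algebra ℚ R]

lemma mul_pderiv_hAtInt (k : ℕ+) (z : ℤ) :
    ((k : ℕ) : SymFn R) * pderiv k (hAtInt X z) = hAtInt X (z - k) := by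
  suffices ∀ (n : ℕ) (z : ℤ), z < n →
      ((k : ℕ) : SymFn R) * pderiv k (hAtInt X z) = hAtInt X (z - k) from
    this (z.toNat + 1) z (by omega)
  intro n
  induction n with
  | zero =>
    intro z hz
    rw [hAtInt_of_neg _ hz, hAtInt_of_neg _ (by omega), map_zero, mul_zero]
  | succ n ih =>
    intro z hz
    rcases (show z ≤ n by omega).lt_or_eq with hz | rfl
    · exact ih z hz
    rcases n.eq_zero_or_pos with rfl | hn
    · rw [hAtInt_natCast, hAt_zero, Derivation.map_one_eq_zero, mul_zero, hAtInt_of_neg _ (by simp)]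
    have := IsAddTorsionFree.of_module_rat (SymFn R)
    refine nsmul_right_injective hn.ne' ?_
    have hX := sum_mul_pderiv_X_mul (R := R) (N := n + k) (k := k) (by omega)
      fun i => hAtInt X (n - (i + 1))
    rw [show ((n : ℤ) - (k.natPred + 1)) = n - k by have := k.natPred_add_one; omega] at hX
    simp only [nsmul_eq_mul]
    calc (n : SymFn R) * (((k : ℕ) : SymFn R) * pderiv k (hAtInt X n))
        = ((k : ℕ) : SymFn R) * pderiv k (((n : ℤ) : SymFn R) * hAtInt X n) := by
          rw [Int.cast_natCast, ← nsmul_eq_mul n, ← nsmul_eq_mul n, map_nsmul, mul_smul_comm]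
      _ = ∑ i ∈ Finset.range (n + k), (((k : ℕ) : SymFn R) * pderiv k (X i.succPNat) *
            hAtInt X (n - (i + 1)) + X i.succPNat * hAtInt X (n - k - (i + 1))) := by
          rw [intCast_mul_hAtInt X (N := n + k) (by simp), map_sum, Finset.mul_sum]
          refine Finset.sum_congr rfl fun i _ => ?_
          rw [sub_right_comm, ← ih _ (by omega), Derivation.leibniz, smul_eq_mul, smul_eq_mul]
          ring
      _ = (n : SymFn R) * hAtInt X (n - k) := by
          rw [Finset.sum_add_distrib, hX, ← intCast_mul_hAtInt X (by omega)]
          push_cast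
          ring

lemma constantCoeff_hAt (n : ℕ) :
    constantCoeff (hAt (X : ℕ+ → SymFn R) n) = if n = 0 then 1 else 0 := by
  have h := congrArg (PowerSeries.coeff n) (hSeries_zero (S := R))
  rw [hSeries, PowerSeries.coeff_mk, PowerSeries.coeff_one] at h
  rw [map_hAt, ← h]
  simp only [constantCoeff_X]
  rfl

lemma mul_pderiv_prod_hAt {ι : Type*} [Fintype ι] (k : ℕ+) (α : ι →₀ ℕ) :
    ((k : ℕ) : SymFn R) * pderiv k (∏ i, hAt X (α i)) =
      ∑ i, if Finsupp.single i (k : ℕ) ≤ α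
        then ∏ j, hAt X ((α - Finsupp.single i (k : ℕ)) j) else 0 := by
  classical
  rw [derivation_prod, Finset.mul_sum]
  refine Finset.sum_congr rfl fun i _ => ?_
  rw [← mul_assoc, ← hAtInt_natCast, mul_pderiv_hAtInt]
  simp only [Finsupp.single_le_iff]
  split_ifs with h
  · rw [← Finset.mul_prod_erase _ _ (Finset.mem_univ i), Finsupp.tsub_apply,
      Finsupp.single_eq_same, ← Nat.cast_sub h, hAtInt_natCast]
    refine congrArg _ (Finset.prod_congr rfl fun j hj => ?_)
    rw [Finsupp.tsub_apply, Finsupp.single_eq_of_ne (Finset.ne_of_mem_erase hj), tsub_zero]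
  · rw [hAtInt_of_neg _ (by omega), zero_mul]

lemma hallForm_prod_hAt {ι : Type*} [Fintype ι] (f : SymFn R) (α : ι →₀ ℕ) :
    hallForm f (∏ i, hAt X (α i)) = coeff α (aeval (fun k : ℕ+ => psum ι R k) f) := by
  classical
  induction f using MvPolynomial.induction_on generalizing α with
  | C a =>
    have h0 : α = 0 ↔ ∀ i ∈ Finset.univ, α i = 0 := by simp [Finsupp.ext_iff]
    rw [aeval_C, algebraMap_eq, coeff_C, ← mul_one (C a), C_mul', map_smul,
      LinearMap.smul_apply, hallForm, ← C_1, C_apply, zForm_monomial, ← constantCoeff_eq, map_prod]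
    simp [constantCoeff_hAt, zWeight, Finset.prod_ite_zero, eq_comm, h0]
  | add f g hf hg => simp only [map_add, LinearMap.add_apply, hf, hg, coeff_add]
  | mul_X f k ih =>
    rw [map_mul (aeval _), aeval_X, psum, Finset.mul_sum, coeff_sum, mul_comm f, hallForm,
      zForm_X_mul, ← smul_eq_mul, ← map_smul, smul_eq_C_mul, map_natCast,
      mul_pderiv_prod_hAt, map_sum]
    refine Finset.sum_congr rfl fun i _ => ?_
    rw [X_pow_eq_monomial, coeff_mul_monomial', mul_one, ← ih]
    split_ifs
    · rfl
    · exact map_zero _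

end HallCoeff

section Flag

variable {S : Type*} [CommRing S] [Algebra ℚ S]

lemma hAtInt_pow_add (a : S) (c : ℕ+ → S) (z : ℤ) :
    hAtInt ((fun k : ℕ+ => a ^ (k : ℕ)) + c) z =
      hAtInt c z + a * hAtInt ((fun k : ℕ+ => a ^ (k : ℕ)) + c) (z - 1) := by
  set H := hSeries ((fun k : ℕ+ => a ^ (k : ℕ)) + c) with hH
  have key : H = hSeries c + PowerSeries.C a * (PowerSeries.X * H) := by
    have ha : hSeries (fun k : ℕ+ => a ^ (k : ℕ)) =
        1 + PowerSeries.C a * (PowerSeries.X * hSeries fun k : ℕ+ => a ^ (k : ℕ)) := by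
      ext n
      cases n with
      | zero => simp [hSeries]
      | succ n =>
        simp [PowerSeries.coeff_succ_X_mul, hSeries, hAt_pow, PowerSeries.coeff_one, pow_succ']
    conv_lhs => rw [hH, hSeries_add, ha]
    rw [hH, hSeries_add]
    ring
  rcases lt_or_ge z 0 with hz | hz
  · rw [hAtInt_of_neg _ hz, hAtInt_of_neg _ hz, hAtInt_of_neg _ (by omega), mul_zero, add_zero]
  lift z to ℕ using hz
  have hn := congrArg (PowerSeries.coeff z) key
  cases z with
  | zero => simp [hAtInt]
  | succ n =>
    rw [map_add, PowerSeries.coeff_C_mul, PowerSeries.coeff_succ_X_mul] at hn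
    rw [Nat.cast_succ, add_sub_cancel_right, ← Nat.cast_succ, hAtInt_natCast, hAtInt_natCast,
      hAtInt_natCast]
    simpa only [hH, hSeries, PowerSeries.coeff_mk] using hn

/-- Subtracting from column `j` its left neighbour times `a m`, for each `m < j` in turn, removes
the letters `a 0, …, a (j - 1)` from its alphabet. -/
lemma det_hAtInt_flag {n : ℕ} (b : Fin n → ℤ) (a : ℕ → S) (c : ℕ → ℕ+ → S)
    (h : ∀ j, c j = (fun k : ℕ+ => a j ^ (k : ℕ)) + c (j + 1)) :
    (Matrix.of fun i j : Fin n => hAtInt (c 0) (b i + j)).det =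
      (Matrix.of fun i j : Fin n => hAtInt (c j) (b i + j)).det := by
  obtain _ | n := n
  · simp
  suffices ∀ m : ℕ, (Matrix.of fun i j : Fin (n + 1) => hAtInt (c 0) (b i + j)).det =
      (Matrix.of fun i j : Fin (n + 1) => hAtInt (c (min j m)) (b i + j)).det by
    rw [this (n + 1)]
    refine congrArg _ (Matrix.ext fun i j => ?_)
    rw [Matrix.of_apply, Matrix.of_apply, min_eq_left j.isLt.le]
  intro m
  induction m with
  | zero => simp
  | succ m ih =>
    rw [ih]
    refine Matrix.det_eq_of_forall_col_eq_smul_add_pred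
      (fun j => if m ≤ j then a m else 0) (fun i => by simp) fun i j => ?_
    simp only [Matrix.of_apply, Fin.val_succ, Fin.val_castSucc]
    split_ifs with hm
    · rw [min_eq_right (by omega), min_eq_right (by omega), min_eq_right hm, h m, hAtInt_pow_add]
      push_cast
      rw [add_sub_assoc, add_sub_cancel_right]
    · rw [min_eq_left (by omega), min_eq_left (by omega), zero_mul, add_zero]

variable {R : Type} [CommRing R]

/-- The power sums of the variables `x_j, x_{j+1}, …, x_{M-1}`. -/
def tailPsum (R : Type) [CommRing R] (M j : ℕ) (k : ℕ+) : MvPolynomial (Fin M) R :=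
  ∑ i with j ≤ i.val, X i ^ (k : ℕ)

lemma tailPsum_zero (M : ℕ) : tailPsum R M 0 = fun k : ℕ+ => psum (Fin M) R k := by
  ext1 k
  simp [tailPsum, psum]

lemma tailPsum_eq_pow_add (M j : ℕ) :
    tailPsum R M j = (fun k : ℕ+ => (if h : j < M then X ⟨j, h⟩ else 0) ^ (k : ℕ)) +
      tailPsum R M (j + 1) := by
  ext1 k
  rw [Pi.add_apply, tailPsum, tailPsum]
  split_ifs with h
  · rw [← Finset.sum_insert (s := {i : Fin M | j + 1 ≤ i.val}) (a := ⟨j, h⟩)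
      (f := fun i => X i ^ (k : ℕ)) (by simp)]
    congr 1
    ext i
    simp only [Finset.mem_filter_univ, Finset.mem_insert, Fin.ext_iff]
    omega
  · rw [zero_pow k.ne_zero, zero_add]
    congr 1
    ext i
    simp only [Finset.mem_filter_univ]
    omega

lemma coeff_prod_sum_monomial {σ ι : Type*} [Fintype ι] [DecidableEq σ] [DecidableEq ι]
    (T : ι → Finset (σ →₀ ℕ)) (α : σ →₀ ℕ) :
    coeff α (∏ j, ∑ d ∈ T j, monomial d (1 : R)) =
      ({p ∈ Fintype.piFinset T | ∑ j, p j = α} : Finset _).card := by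
  rw [Finset.prod_univ_sum, coeff_sum, Finset.card_filter, Nat.cast_sum]
  refine Finset.sum_congr rfl fun p _ => ?_
  rw [← monomial_sum_one, coeff_monomial]
  split_ifs <;> simp

/-- The ways of writing exponents as `∑ j, p j` where `p j` has degree `e j` and involves only
the variables `x_j, x_{j+1}, …`. -/
def flagExponents {M : ℕ} (e : Fin M → ℕ) : Finset (Fin M → Fin M →₀ ℕ) :=
  Fintype.piFinset fun j => ({i | j ≤ i} : Finset (Fin M)).finsuppAntidiag (e j)

variable [Algebra ℚ R]

lemma hAt_tailPsum {M : ℕ} (j : Fin M) (n : ℕ) :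
    hAt (tailPsum R M j) n =
      ∑ d ∈ ({i | j ≤ i} : Finset (Fin M)).finsuppAntidiag n, monomial d 1 := by
  have h : tailPsum R M j = ∑ i with j ≤ i, fun k : ℕ+ => X i ^ (k : ℕ) := by
    ext1 k
    simp [tailPsum]
  rw [h, hAt_sum]
  refine Finset.sum_congr rfl fun d hd => ?_
  rw [Finset.prod_congr rfl fun i _ => hAt_pow (X i) (d i), monomial_eq, map_one, one_mul]
  exact (Finsupp.prod_of_support_subset d (Finset.mem_finsuppAntidiag.mp hd).2 _ (by simp)).symm

lemma coeff_prod_hAt_tailPsum {M : ℕ} (e : Fin M → ℕ) (α : Fin M →₀ ℕ) :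
    coeff α (∏ j : Fin M, hAt (tailPsum R M j) (e j)) =
      ({p ∈ flagExponents e | ∑ j, p j = α} : Finset _).card := by
  simp only [hAt_tailPsum]
  exact coeff_prod_sum_monomial _ α

end Flag

section Kostka

lemma mem_flagExponents {M : ℕ} {e : Fin M → ℕ} {p : Fin M → Fin M →₀ ℕ} :
    p ∈ flagExponents e ↔ ∀ j, ∑ i, p j i = e j ∧ ∀ i < j, p j i = 0 := by
  rw [flagExponents, Fintype.mem_piFinset]
  refine forall_congr' fun j => ?_
  have hsupp : (p j).support ⊆ ({i | j ≤ i} : Finset (Fin M)) ↔ ∀ i < j, p j i = 0 := by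
    simp only [Finset.subset_iff, Finset.mem_filter_univ, Finsupp.mem_support_iff]
    exact forall_congr' fun i => by rw [← not_lt, not_imp_not]
  rw [Finset.mem_finsuppAntidiag, hsupp]
  refine and_congr_left fun h => ?_
  rw [← Finset.sum_subset (Finset.subset_univ ({i | j ≤ i} : Finset (Fin M))) fun i _ hi =>
    h i (by simpa using hi)]

lemma sum_sum_le_of_mem_flagExponents {M : ℕ} {e : Fin M → ℕ} {p : Fin M → Fin M →₀ ℕ}
    (hp : p ∈ flagExponents e) (k : ℕ) :
    ∑ i : Fin M with i.val < k, (∑ j, p j) i ≤ ∑ j : Fin M with j.val < k, e j := by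
  rw [mem_flagExponents] at hp
  simp only [Finsupp.finsetSum_apply]
  rw [Finset.sum_comm, Finset.sum_filter (s := Finset.univ)]
  refine Finset.sum_le_sum fun j _ => ?_
  split_ifs with hj
  · rw [← (hp j).1]
    exact Finset.sum_le_univ_sum_of_nonneg fun i => (p j i).zero_le
  · refine (Finset.sum_eq_zero fun i hi => (hp j).2 i ?_).le
    exact Fin.lt_def.mpr ((Finset.mem_filter_univ _).mp hi |>.trans_le (not_lt.mp hj))

lemma sum_sum_eq_of_mem_flagExponents {M : ℕ} {e : Fin M → ℕ} {p : Fin M → Fin M →₀ ℕ}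
    (hp : p ∈ flagExponents e) : ∑ i, (∑ j, p j) i = ∑ j, e j := by
  simp only [Finsupp.finsetSum_apply]
  rw [Finset.sum_comm]
  exact Finset.sum_congr rfl fun j _ => (mem_flagExponents.mp hp j).1

lemma eq_single_of_mem_flagExponents {M : ℕ} {e : Fin M → ℕ} {p : Fin M → Fin M →₀ ℕ}
    (hp : p ∈ flagExponents e) (hsum : ∀ i, (∑ j, p j) i = e i) (j : Fin M) :
    p j = Finsupp.single j (e j) := by
  rw [mem_flagExponents] at hp
  induction j using WellFoundedLT.induction with
  | _ j ih =>
    have hj : p j j = e j := by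
      rw [← hsum j, Finsupp.finsetSum_apply]
      refine (Finset.sum_eq_single_of_mem (f := fun j' => p j' j) j (Finset.mem_univ j)
        fun j' _ hne => ?_).symm
      rcases hne.lt_or_gt with hlt | hlt
      · rw [ih j' hlt, Finsupp.single_eq_of_ne hlt.ne']
      · exact (hp j').2 j hlt
    have hrest : ∑ i ∈ Finset.univ.erase j, p j i = 0 := by
      have h := (hp j).1
      rw [← Finset.add_sum_erase _ (fun i => p j i) (Finset.mem_univ j), hj] at h
      exact Nat.add_left_cancel h
    ext i
    rcases eq_or_ne i j with rfl | hi
    · rw [hj, Finsupp.single_eq_same]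
    · rw [Finsupp.single_eq_of_ne hi]
      exact (Finset.sum_eq_zero_iff.mp hrest) i (Finset.mem_erase.mpr ⟨hi, Finset.mem_univ i⟩)

variable {R : Type} [CommRing R] [Algebra ℚ R]

lemma sum_le_of_coeff_prod_hAtInt_ne_zero {M : ℕ} {z : Fin M → ℤ} {α : Fin M →₀ ℕ}
    (h : coeff α (∏ j : Fin M, hAtInt (tailPsum R M j) (z j)) ≠ 0) :
    (∀ k, ∑ i : Fin M with i.val < k, (α i : ℤ) ≤ ∑ j : Fin M with j.val < k, z j) ∧
      ∑ i, (α i : ℤ) = ∑ j, z j := by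
  have hz : ∀ j, 0 ≤ z j := fun j => not_lt.mp fun hj => h <| by
    rw [Finset.prod_eq_zero (Finset.mem_univ j) (hAtInt_of_neg _ hj), coeff_zero]
  lift z to Fin M → ℕ using hz
  simp only [hAtInt_natCast] at h ⊢
  rw [coeff_prod_hAt_tailPsum] at h
  obtain ⟨p, hp⟩ := Finset.card_ne_zero.mp fun h0 => h (by rw [h0, Nat.cast_zero])
  obtain ⟨hpe, rfl⟩ := Finset.mem_filter.mp hp
  exact ⟨fun k => mod_cast sum_sum_le_of_mem_flagExponents hpe k,
    mod_cast sum_sum_eq_of_mem_flagExponents hpe⟩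

lemma coeff_prod_hAt_tailPsum_self {M : ℕ} (α : Fin M →₀ ℕ) :
    coeff α (∏ j : Fin M, hAt (tailPsum R M j) (α j)) = 1 := by
  have h : ({p ∈ flagExponents α | ∑ j, p j = α} : Finset _) =
      {fun j => Finsupp.single j (α j)} := by
    ext p
    rw [Finset.mem_filter, Finset.mem_singleton]
    constructor
    · rintro ⟨hp, hsum⟩
      exact funext (eq_single_of_mem_flagExponents hp fun i => by rw [hsum])
    · rintro rfl
      refine ⟨mem_flagExponents.mpr fun j => ⟨by simp [Finsupp.single_apply], fun i hi => ?_⟩,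
        Finsupp.univ_sum_single α⟩
      exact Finsupp.single_eq_of_ne hi.ne
  rw [coeff_prod_hAt_tailPsum, h, Finset.card_singleton, Nat.cast_one]

lemma sum_filter_comp_perm_le {M : ℕ} {b : Fin M → ℤ} (hb : Antitone b)
    (σ : Equiv.Perm (Fin M)) (k : ℕ) :
    ∑ j : Fin M with j.val < k, b (σ j) ≤ ∑ j : Fin M with j.val < k, b j := by
  have hmono : Monovary b fun j : Fin M => if j.val < k then (1 : ℤ) else 0 := by
    intro i j hij
    refine hb (Fin.le_def.mpr ?_)
    dsimp only at hij
    split_ifs at hij <;> omega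
  simpa [Finset.sum_filter] using hmono.sum_comp_perm_smul_le_sum_smul (σ := σ)

lemma eq_one_of_sum_filter_le {M : ℕ} {b : Fin M → ℤ} (hb : StrictAnti b)
    {σ : Equiv.Perm (Fin M)}
    (h : ∀ k, ∑ j : Fin M with j.val < k, b j ≤ ∑ j : Fin M with j.val < k, b (σ j)) : σ = 1 := by
  have hk := fun k => (h k).antisymm (sum_filter_comp_perm_le hb.antitone σ k)
  refine Equiv.ext fun j => ?_
  have hins : ({i | i.val < j.val + 1} : Finset (Fin M)) =
      insert j ({i | i.val < j.val} : Finset (Fin M)) := by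
    ext i
    simp only [Finset.mem_filter_univ, Finset.mem_insert, Fin.ext_iff]
    omega
  have hj := hk (j + 1)
  rw [hins, Finset.sum_insert (by simp), Finset.sum_insert (by simp), hk j] at hj
  exact hb.injective (add_right_cancel hj).symm

/-- The Schur polynomial `det h_{b_i + j}` in `M` variables. -/
def jacobiTrudi (R : Type) [CommRing R] [Algebra ℚ R] {M : ℕ} (b : Fin M → ℤ) :
    MvPolynomial (Fin M) R :=
  (Matrix.of fun i j : Fin M => hAtInt (fun k : ℕ+ => psum (Fin M) R k) (b i + j)).det

lemma jacobiTrudi_eq_sum {M : ℕ} (b : Fin M → ℤ) :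
    jacobiTrudi R b = ∑ σ : Equiv.Perm (Fin M), Equiv.Perm.sign σ •
      ∏ j : Fin M, hAtInt (tailPsum R M j) (b (σ j) + j) := by
  have h := det_hAtInt_flag (S := MvPolynomial (Fin M) R) b
    (fun j => if h : j < M then X ⟨j, h⟩ else 0) (tailPsum R M) (tailPsum_eq_pow_add M)
  rw [tailPsum_zero] at h
  rw [jacobiTrudi, h, Matrix.det_apply]
  simp only [Matrix.of_apply]

lemma sum_le_of_coeff_jacobiTrudi_ne_zero {M : ℕ} {b : Fin M → ℤ} (hb : Antitone b)
    {α : Fin M →₀ ℕ} (h : coeff α (jacobiTrudi R b) ≠ 0) :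
    (∀ k, ∑ i : Fin M with i.val < k, (α i : ℤ) ≤ ∑ j : Fin M with j.val < k, (b j + j)) ∧
      ∑ i, (α i : ℤ) = ∑ j, (b j + j) := by
  rw [jacobiTrudi_eq_sum, coeff_sum] at h
  obtain ⟨σ, -, hσ⟩ := Finset.exists_ne_zero_of_sum_ne_zero h
  rw [Units.smul_def, coeff_smul] at hσ
  obtain ⟨hle, heq⟩ := sum_le_of_coeff_prod_hAtInt_ne_zero (right_ne_zero_of_smul hσ)
  simp only [Finset.sum_add_distrib] at hle heq ⊢
  rw [Equiv.sum_comp σ b] at heq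
  exact ⟨fun k => (hle k).trans (add_le_add_left (sum_filter_comp_perm_le hb σ k) _), heq⟩

lemma coeff_jacobiTrudi_self {M : ℕ} {b : Fin M → ℤ} (hb : StrictAnti b) {α : Fin M →₀ ℕ}
    (hα : ∀ j, (α j : ℤ) = b j + j) : coeff α (jacobiTrudi R b) = 1 := by
  rw [jacobiTrudi_eq_sum, coeff_sum, Finset.sum_eq_single 1]
  · simp only [Equiv.Perm.sign_one, one_smul, Equiv.Perm.one_apply, ← hα, hAtInt_natCast]
    exact coeff_prod_hAt_tailPsum_self α
  · intro σ _ hσ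
    by_contra hne
    rw [Units.smul_def, coeff_smul] at hne
    refine hσ (eq_one_of_sum_filter_le hb fun k => ?_)
    have := (sum_le_of_coeff_prod_hAtInt_ne_zero (right_ne_zero_of_smul hne)).1 k
    simpa only [hα, Finset.sum_add_distrib, add_le_add_iff_right] using this
  · exact fun h => absurd (Finset.mem_univ _) h

end Kostka

section SchurDual

/-- The product `h_μ` of complete homogeneous symmetric functions at an alphabet. -/
def hParAt {S : Type*} [CommRing S] [Algebra ℚ S] (c : ℕ+ → S) (mu : Multiset ℕ+) : S :=
  (mu.map fun a : ℕ+ => hAt c a).prod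

lemma map_hParAt {S S' : Type*} [CommRing S] [Algebra ℚ S] [CommRing S'] [Algebra ℚ S']
    (f : S →+* S') (c : ℕ+ → S) (mu : Multiset ℕ+) :
    f (hParAt c mu) = hParAt (fun k => f (c k)) mu := by
  rw [hParAt, map_multiset_prod, Multiset.map_map, hParAt]
  simp only [Function.comp_apply, map_hAt]

lemma hParAt_eq_prod {S : Type*} [CommRing S] [Algebra ℚ S] (c : ℕ+ → S) {mu : Multiset ℕ+}
    {M : ℕ} (hM : Multiset.card mu ≤ M) : hParAt c mu = ∏ i : Fin M, hAt c (part mu i) :=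
  (prod_map_eq_prod_range_part (hAt_zero c) hM).trans (Finset.prod_range _)

lemma pSum_eq_sum_filter {mu : Multiset ℕ+} {M : ℕ} (hM : Multiset.card mu ≤ M) (k : ℕ) :
    pSum mu k = ∑ i : Fin M with i.val < k, part mu i := by
  rw [Finset.sum_filter, Fin.sum_univ_eq_sum_range fun i => if i < k then part mu i else 0,
    ← Finset.sum_filter, pSum_eq_sum_part]
  refine (Finset.sum_subset (fun i hi => ?_) fun i hi hi' => ?_).symm
  · exact Finset.mem_range.mpr (Finset.mem_filter.mp hi).2
  · rw [Finset.mem_filter, Finset.mem_range] at hi'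
    exact part_of_card_le (by have := Finset.mem_range.mp hi; omega)

lemma wt_eq_sum {mu : Multiset ℕ+} {M : ℕ} (hM : Multiset.card mu ≤ M) :
    wt mu = ∑ i : Fin M, part mu i := by
  rw [← pSum_eq_wt hM, pSum_eq_sum_part, Finset.sum_range]

variable {R : Type} [Field R] [CharZero R]

lemma schur_eq_det {nu : Multiset ℕ+} {M : ℕ} (hM : Multiset.card nu ≤ M) :
    schur (R := R) nu =
      (Matrix.of fun i j : Fin M => hAtInt X ((part nu i : ℤ) + j - i)).det := by
  induction M, hM using Nat.le_induction with
  | base => simp only [schur, hInt_eq_hAtInt, part]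
  | succ M hM ih =>
    rw [Matrix.det_succ_row _ (Fin.last M), Fin.sum_univ_castSucc, Finset.sum_eq_zero, zero_add, ih]
    · simp only [Matrix.of_apply, Fin.val_last, part_of_card_le hM, Nat.cast_zero, zero_add,
        sub_self, Even.neg_one_pow ⟨M, rfl⟩, one_mul]
      rw [← Nat.cast_zero, hAtInt_natCast, hAt_zero, one_mul]
      refine congrArg _ (Matrix.ext fun i j => ?_)
      rw [Matrix.submatrix_apply, Fin.succAbove_last_apply, Fin.succAbove_last_apply]
      rfl
    · intro j _
      rw [Matrix.of_apply, Fin.val_last, part_of_card_le hM, hAtInt_of_neg, mul_zero, zero_mul]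
      simp

lemma aeval_psum_schur {nu : Multiset ℕ+} {M : ℕ} (hM : Multiset.card nu ≤ M) :
    aeval (fun k : ℕ+ => psum (Fin M) R k) (schur (R := R) nu) =
      jacobiTrudi R fun i => (part nu i : ℤ) - i := by
  rw [schur_eq_det hM, AlgHom.map_det, jacobiTrudi]
  refine congrArg _ (Matrix.ext fun i j => ?_)
  rw [AlgHom.mapMatrix_apply, Matrix.map_apply, Matrix.of_apply, Matrix.of_apply,
    sub_add_eq_add_sub]
  simpa only [AlgHom.toRingHom_eq_coe, RingHom.coe_coe, aeval_X] using
    map_hAtInt (aeval fun k : ℕ+ => psum (Fin M) R k : SymFn R →ₐ[R] _).toRingHom X _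

lemma hallForm_hParAt (f : SymFn R) {mu : Multiset ℕ+} {M : ℕ} (hM : Multiset.card mu ≤ M) :
    hallForm f (hParAt X mu) =
      coeff (Finsupp.equivFunOnFinite.symm fun i : Fin M => part mu i)
        (aeval (fun k : ℕ+ => psum (Fin M) R k) f) := by
  rw [hParAt_eq_prod X hM, ← hallForm_prod_hAt]
  rfl

lemma strictAnti_part_sub (nu : Multiset ℕ+) (M : ℕ) :
    StrictAnti fun i : Fin M => (part nu i : ℤ) - i := by
  intro i j hij
  have := antitone_part nu (Fin.lt_def.mp hij).le
  have := Fin.lt_def.mp hij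
  dsimp only
  omega

lemma domLE_of_hallForm_schur_ne_zero {mu nu : Multiset ℕ+}
    (h : hallForm (schur (R := R) nu) (hParAt X mu) ≠ 0) : DomLE mu nu := by
  have hmu := le_max_left (Multiset.card mu) (Multiset.card nu)
  have hnu := le_max_right (Multiset.card mu) (Multiset.card nu)
  rw [hallForm_hParAt _ hmu, aeval_psum_schur hnu] at h
  have hdom := sum_le_of_coeff_jacobiTrudi_ne_zero (strictAnti_part_sub nu _).antitone h
  simp only [sub_add_cancel, Finsupp.equivFunOnFinite_symm_apply_apply] at hdom
  refine ⟨?_, fun k => ?_⟩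
  · rw [wt_eq_sum hmu, wt_eq_sum hnu]
    exact_mod_cast hdom.2
  · rw [pSum_eq_sum_filter hmu, pSum_eq_sum_filter hnu]
    exact_mod_cast hdom.1 k

lemma hallForm_schur_self (mu : Multiset ℕ+) :
    hallForm (schur (R := R) mu) (hParAt X mu) = 1 := by
  rw [hallForm_hParAt _ le_rfl, aeval_psum_schur le_rfl]
  exact coeff_jacobiTrudi_self (strictAnti_part_sub mu _) fun j => by simp

end SchurDual

section DualBasis

lemma wt_add (mu nu : Multiset ℕ+) : wt (mu + nu) = wt mu + wt nu := by
  simp [wt]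

lemma wt_cons (a : ℕ+) (mu : Multiset ℕ+) : wt (a ::ₘ mu) = a + wt mu := by
  simp [wt]

lemma hParAt_add {S : Type*} [CommRing S] [Algebra ℚ S] (c : ℕ+ → S) (mu nu : Multiset ℕ+) :
    hParAt c (mu + nu) = hParAt c mu * hParAt c nu := by
  simp [hParAt]

/-- The span of the `h_μ` with `|μ| = n` at an alphabet. -/
def hSpan (R : Type*) {A : Type*} [CommRing R] [CommRing A] [Algebra R A] [Algebra ℚ A]
    (c : ℕ+ → A) (n : ℕ) : Submodule R A :=
  Submodule.span R (hParAt c '' {mu | wt mu = n})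

section Span

variable {R A : Type*} [CommRing R] [CommRing A] [Algebra R A] [Algebra ℚ A] {c : ℕ+ → A}

lemma mul_mem_hSpan {m n : ℕ} {x y : A} (hx : x ∈ hSpan R c m) (hy : y ∈ hSpan R c n) :
    x * y ∈ hSpan R c (m + n) := by
  have h := Submodule.mul_mem_mul hx hy
  rw [hSpan, hSpan, Submodule.span_mul_span] at h
  refine Submodule.span_mono ?_ h
  rintro _ ⟨_, ⟨mu, hmu, rfl⟩, _, ⟨nu, hnu, rfl⟩, rfl⟩
  exact ⟨mu + nu, by rw [Set.mem_ofPred_eq, wt_add, hmu, hnu], hParAt_add c mu nu⟩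

lemma hAt_mem_hSpan (n : ℕ) : hAt c n ∈ hSpan R c n := by
  rcases n.eq_zero_or_pos with rfl | hn
  · exact Submodule.subset_span ⟨0, by simp [wt], by simp [hParAt]⟩
  · lift n to ℕ+ using hn
    exact Submodule.subset_span ⟨{n}, by simp [wt], by simp [hParAt]⟩

lemma apply_mem_hSpan (k : ℕ+) : c k ∈ hSpan R c k := by
  obtain ⟨n, rfl⟩ : ∃ n : ℕ, k = n.succPNat := ⟨k.natPred, (PNat.succPNat_natPred k).symm⟩
  induction n using Nat.strong_induction_on with
  | _ n ih =>
    have h := succ_mul_hAt_succ c n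
    rw [Finset.sum_range_succ, Nat.sub_self, hAt_zero, mul_one, ← sub_eq_iff_eq_add'] at h
    rw [← h, ← Nat.cast_succ, ← nsmul_eq_mul]
    refine Submodule.sub_mem _ (nsmul_mem (hAt_mem_hSpan _) _)
      (Submodule.sum_mem _ fun i hi => ?_)
    have hin := Finset.mem_range.mp hi
    have hmul := mul_mem_hSpan (ih i hin) (hAt_mem_hSpan (R := R) (n - i))
    rwa [show (i.succPNat : ℕ) + (n - i) = n.succPNat by simp; omega] at hmul

lemma prod_map_mem_hSpan (mu : Multiset ℕ+) : (mu.map c).prod ∈ hSpan R c (wt mu) := by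
  induction mu using Multiset.induction_on with
  | empty => simpa [wt] using hAt_mem_hSpan (R := R) (c := c) 0
  | cons a mu ih =>
    rw [Multiset.map_cons, Multiset.prod_cons, wt_cons]
    exact mul_mem_hSpan (apply_mem_hSpan a) ih

end Span

lemma prod_map_X_toMultiset {R : Type} [CommRing R] (m : ℕ+ →₀ ℕ) :
    ((Finsupp.toMultiset m).map X).prod = monomial m (1 : R) := by
  rw [monomial_eq, map_one, one_mul, Finset.prod_multiset_map_count, Finsupp.prod,
    Finsupp.toFinset_toMultiset]
  simp only [Finsupp.count_toMultiset]

lemma span_range_hParAt {R : Type} [CommRing R] [Algebra ℚ R] :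
    Submodule.span R (Set.range (hParAt (X : ℕ+ → SymFn R))) = ⊤ := by
  rw [eq_top_iff, ← (basisMonomials ℕ+ R).span_eq, Submodule.span_le, coe_basisMonomials]
  rintro _ ⟨m, rfl⟩
  beta_reduce
  rw [← prod_map_X_toMultiset]
  exact Submodule.span_mono (Set.image_subset_range _ _) (prod_map_mem_hSpan _)

variable {R : Type} [Field R] [CharZero R]

lemma exists_sum_hParAt_eq (f : SymFn R) :
    ∃ a : Multiset ℕ+ →₀ R, (a.sum fun nu x => x • hParAt X nu) = f := by
  have hf : f ∈ Submodule.span R (Set.range (hParAt (X : ℕ+ → SymFn R))) := by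
    rw [span_range_hParAt]
    trivial
  exact Finsupp.mem_span_range_iff_exists_finsupp.mp hf

/-- A family unitriangular, for the dominance order, with respect to the Hall dual of the
basis `h_μ`. -/
def IsHallUnitriangular (p : Multiset ℕ+ → SymFn R) : Prop :=
  (∀ mu nu, hallForm (p nu) (hParAt X mu) ≠ 0 → DomLE mu nu) ∧
    ∀ mu, hallForm (p mu) (hParAt X mu) = 1

lemma isHallUnitriangular_of_sub_schur_mem {p : Multiset ℕ+ → SymFn R}
    (hp : ∀ nu, p nu - schur nu ∈ Submodule.span R (schur '' {mu | StrictDom mu nu})) :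
    IsHallUnitriangular p := by
  have key : ∀ mu nu, hallForm (p nu - schur nu) (hParAt X mu) ≠ 0 → StrictDom mu nu := by
    intro mu nu h
    by_contra hmu
    refine h ?_
    refine LinearMap.mem_ker (f := hallForm.flip (hParAt X mu)).mp
      ((Submodule.span_le.mpr ?_ : Submodule.span R (schur '' {mu | StrictDom mu nu}) ≤ _) (hp nu))
    rintro _ ⟨rho, hrho, rfl⟩
    change hallForm (schur rho) (hParAt X mu) = 0
    by_contra hne
    have hle := domLE_of_hallForm_schur_ne_zero hne
    refine hmu ⟨?_, hle.trans hrho.2⟩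
    rintro rfl
    exact hrho.1 (DomLE.antisymm hrho.2 hle)
  refine ⟨fun mu nu h => ?_, fun mu => ?_⟩
  · by_contra hle
    refine h ?_
    rw [← sub_add_cancel (p nu) (schur nu), map_add, LinearMap.add_apply,
      not_not.mp fun h' => hle (key mu nu h').2,
      not_not.mp fun h' => hle (domLE_of_hallForm_schur_ne_zero h'), add_zero]
  · rw [← sub_add_cancel (p mu) (schur mu), map_add, LinearMap.add_apply, hallForm_schur_self,
      not_not.mp fun h' => (key mu mu h').1 rfl, zero_add]

namespace IsHallUnitriangular

variable {p : Multiset ℕ+ → SymFn R} (hp : IsHallUnitriangular p)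
include hp

lemma hallForm_sum (a : Multiset ℕ+ →₀ R) {rho : Multiset ℕ+}
    (h : ∀ nu ∈ a.support, DomLE nu rho → nu = rho) :
    hallForm (p rho) (a.sum fun nu x => x • hParAt X nu) = a rho := by
  rw [Finsupp.sum, map_sum, Finset.sum_eq_single rho]
  · rw [map_smul, hp.2, smul_eq_mul, mul_one]
  · intro nu hnu hne
    rw [map_smul, not_not.mp fun h' => hne (h nu hnu (hp.1 nu rho h')), smul_zero]
  · intro h0
    rw [Finsupp.notMem_support_iff.mp h0, zero_smul, map_zero]

lemma domLE_of_mem_support {a : Multiset ℕ+ →₀ R} {U : Set (Multiset ℕ+)}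
    (hU : ∀ nu ∈ U, ∀ rho, DomLE nu rho → rho ∈ U)
    (h : ∀ rho ∉ U, hallForm (p rho) (a.sum fun nu x => x • hParAt X nu) = 0) :
    ↑a.support ⊆ U := by
  classical
  by_contra hne
  obtain ⟨nu, hnu, hnuU⟩ := Set.not_subset.mp hne
  obtain ⟨rho, hrho⟩ := (a.support.filter (· ∉ U)).exists_minimalFor pSum
    ⟨nu, Finset.mem_filter.mpr ⟨hnu, hnuU⟩⟩
  obtain ⟨hrho_supp, hrhoU⟩ := Finset.mem_filter.mp hrho.1
  refine Finsupp.mem_support_iff.mp hrho_supp ?_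
  rw [← hp.hallForm_sum a, h rho hrhoU]
  intro nu hnu hle
  have hnuU : nu ∉ U := fun hmem => hrhoU (hU nu hmem rho hle)
  exact hle.antisymm
    ⟨hle.1.symm, hrho.2 (Finset.mem_filter.mpr ⟨hnu, hnuU⟩) hle.2⟩

lemma eq_zero {f : SymFn R} (h : ∀ rho, hallForm (p rho) f = 0) : f = 0 := by
  obtain ⟨a, rfl⟩ := exists_sum_hParAt_eq f
  have ha := hp.domLE_of_mem_support (U := ∅) (by simp) fun rho _ => h rho
  rw [Set.subset_empty_iff, Finset.coe_eq_empty, Finsupp.support_eq_empty] at ha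
  rw [ha, Finsupp.sum_zero_index]

lemma sub_hParAt_mem_span {f : SymFn R} {mu : Multiset ℕ+}
    (h : ∀ rho ≠ mu, hallForm (p rho) f = 0) (hmu : hallForm (p mu) f = 1) :
    f - hParAt X mu ∈ Submodule.span R (hParAt X '' {nu | StrictDom mu nu}) := by
  obtain ⟨a, rfl⟩ := exists_sum_hParAt_eq f
  have ha := hp.domLE_of_mem_support (U := {nu | DomLE mu nu})
    (fun nu hnu rho hle => DomLE.trans hnu hle)
    fun rho hrho => h rho fun heq => hrho (heq ▸ DomLE.refl mu)
  rw [hp.hallForm_sum a fun nu hnu hle => hle.antisymm (ha hnu)] at hmu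
  have hmem : mu ∈ a.support := Finsupp.mem_support_iff.mpr (hmu ▸ one_ne_zero)
  rw [Finsupp.sum, ← Finset.add_sum_erase _ _ hmem, hmu, one_smul, add_sub_cancel_left]
  refine Submodule.sum_mem _ fun nu hnu => Submodule.smul_mem _ _ (Submodule.subset_span ?_)
  obtain ⟨hne, hnu⟩ := Finset.mem_erase.mp hnu
  exact ⟨nu, ⟨hne.symm, ha hnu⟩, rfl⟩

end IsHallUnitriangular

end DualBasis

section Macdonald

variable {R : Type} [Field R]

lemma eq_zero_of_scaleHom_eq_zero {c : ℕ+ → R} (hc : ∀ k, c k ≠ 0) {f : SymFn R}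
    (h : scaleHom c f = 0) : f = 0 := by
  ext m
  have hm := congrArg (coeff m) h
  rw [coeff_scaleHom, coeff_zero] at hm
  refine (mul_eq_zero.mp hm).resolve_left (Finset.prod_ne_zero_iff.mpr fun k _ => ?_)
  exact pow_ne_zero _ (hc k)

lemma innerQT_eq_hallForm (q t : R) (f g : SymFn R) :
    innerQT q t f g =
      hallForm f (scaleHom (fun k => (1 - q ^ (k : ℕ)) / (1 - t ^ (k : ℕ))) g) := by
  rw [innerQT_eq_zForm, hallForm, zForm_scaleHom]

variable {q t : R} {P : Multiset ℕ+ → SymFn R}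

lemma hallForm_Qprime (f : SymFn R) (mu : Multiset ℕ+) :
    hallForm f (Qprime q t P mu) = (innerQT q t (P mu) (P mu))⁻¹ * innerQT q t f (P mu) := by
  rw [Qprime, Qfam, map_smul, map_smul, smul_eq_mul, ← innerQT_eq_hallForm]

lemma zForm_Qprime (hq : ∀ k : ℕ+, 1 - q ^ (k : ℕ) ≠ 0) (ht : ∀ k : ℕ+, 1 - t ^ (k : ℕ) ≠ 0)
    (g : SymFn R) (mu : Multiset ℕ+) :
    zForm (fun k => (1 - t ^ (k : ℕ)) / (1 - q ^ (k : ℕ)) * (k : ℕ)) (Qprime q t P mu) g =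
      (innerQT q t (P mu) (P mu))⁻¹ * hallForm (P mu) g := by
  have hκ : (fun k : ℕ+ => (1 - q ^ (k : ℕ)) / (1 - t ^ (k : ℕ)) *
      ((1 - t ^ (k : ℕ)) / (1 - q ^ (k : ℕ)) * ((k : ℕ) : R))) = fun k : ℕ+ => ((k : ℕ) : R) := by
    ext1 k
    have := hq k
    have := ht k
    field_simp
  rw [zForm_comm, Qprime, zForm_scaleHom, hκ, ← hallForm, Qfam, map_smul, smul_eq_mul, hallForm,
    zForm_comm]

variable [CharZero R]

lemma innerQT_self_ne_zero (hP : IsMacdonaldBasis q t P) (hq : ∀ k : ℕ+, 1 - q ^ (k : ℕ) ≠ 0)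
    (ht : ∀ k : ℕ+, 1 - t ^ (k : ℕ) ≠ 0) (mu : Multiset ℕ+) :
    innerQT q t (P mu) (P mu) ≠ 0 := by
  intro h
  have hu := isHallUnitriangular_of_sub_schur_mem hP.1
  have hscale : scaleHom (fun k => (1 - q ^ (k : ℕ)) / (1 - t ^ (k : ℕ))) (P mu) = 0 := by
    refine hu.eq_zero fun rho => ?_
    rw [← innerQT_eq_hallForm]
    rcases eq_or_ne rho mu with rfl | hne
    · exact h
    · exact hP.2 rho mu hne
  have hzero := eq_zero_of_scaleHom_eq_zero (fun k => div_ne_zero (hq k) (ht k)) hscale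
  have hone := hu.2 mu
  rw [hzero, map_zero, LinearMap.zero_apply] at hone
  exact zero_ne_one hone

lemma Qprime_sub_hParAt_mem_span (hP : IsMacdonaldBasis q t P)
    (hq : ∀ k : ℕ+, 1 - q ^ (k : ℕ) ≠ 0) (ht : ∀ k : ℕ+, 1 - t ^ (k : ℕ) ≠ 0)
    (mu : Multiset ℕ+) :
    Qprime q t P mu - hParAt X mu ∈ Submodule.span R (hParAt X '' {nu | StrictDom mu nu}) := by
  refine (isHallUnitriangular_of_sub_schur_mem hP.1).sub_hParAt_mem_span (fun rho hne => ?_) ?_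
  · rw [hallForm_Qprime, hP.2 rho mu hne, mul_zero]
  · rw [hallForm_Qprime, inv_mul_cancel₀ (innerQT_self_ne_zero hP hq ht mu)]

lemma domLE_of_zForm_Qprime_ne_zero (hP : IsMacdonaldBasis q t P)
    (hq : ∀ k : ℕ+, 1 - q ^ (k : ℕ) ≠ 0) (ht : ∀ k : ℕ+, 1 - t ^ (k : ℕ) ≠ 0)
    {mu nu : Multiset ℕ+}
    (h : zForm (fun k => (1 - t ^ (k : ℕ)) / (1 - q ^ (k : ℕ)) * (k : ℕ))
      (Qprime q t P mu) (hParAt X nu) ≠ 0) : DomLE nu mu := by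
  rw [zForm_Qprime hq ht] at h
  exact (isHallUnitriangular_of_sub_schur_mem hP.1).1 nu mu (right_ne_zero_of_mul h)

/-- The partitions of `l * r` with at most `l` parts, other than the rectangle `(r^l)`. -/
def nonRect (l : ℕ) (r : ℕ+) : Set (Multiset ℕ+) :=
  {nu | wt nu = l * r ∧ Multiset.card nu ≤ l ∧ nu ≠ Multiset.replicate l r}

lemma Qprime_rect_sub_hParAt_mem_span (hP : IsMacdonaldBasis q t P)
    (hq : ∀ k : ℕ+, 1 - q ^ (k : ℕ) ≠ 0) (ht : ∀ k : ℕ+, 1 - t ^ (k : ℕ) ≠ 0) (l : ℕ) (r : ℕ+) :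
    Qprime q t P (Multiset.replicate l r) - hParAt X (Multiset.replicate l r) ∈
      Submodule.span R (hParAt X '' nonRect l r) := by
  refine Submodule.span_mono (Set.image_mono fun nu hnu => ?_)
    (Qprime_sub_hParAt_mem_span hP hq ht _)
  exact ⟨by rw [← hnu.2.1, wt_replicate], card_le_of_replicate_domLE hnu.2, hnu.1.symm⟩

lemma zForm_Qprime_rect_eq_zero (hP : IsMacdonaldBasis q t P)
    (hq : ∀ k : ℕ+, 1 - q ^ (k : ℕ) ≠ 0) (ht : ∀ k : ℕ+, 1 - t ^ (k : ℕ) ≠ 0)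
    {l : ℕ} {r : ℕ+} {nu : Multiset ℕ+} (hnu : nu ∈ nonRect l r) :
    zForm (fun k => (1 - t ^ (k : ℕ)) / (1 - q ^ (k : ℕ)) * (k : ℕ))
      (Qprime q t P (Multiset.replicate l r)) (hParAt X nu) = 0 := by
  by_contra hne
  exact hnu.2.2 (eq_replicate_of_domLE hnu.2.1 (domLE_of_zForm_Qprime_ne_zero hP hq ht hne))

end Macdonald

section Plethysm

lemma exists_hParAt_eq_prod_hAt {ι : Type*} (s : Finset ι) (d : ι → ℕ) :
    ∃ nu : Multiset ℕ+, wt nu = ∑ i ∈ s, d i ∧ Multiset.card nu ≤ s.card ∧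
      (∀ i ∈ s, d i = 0 ∨ ∃ a ∈ nu, (a : ℕ) = d i) ∧
      ∀ {A : Type*} [CommRing A] [Algebra ℚ A] (c : ℕ+ → A),
        hParAt c nu = ∏ i ∈ s, hAt c (d i) := by
  classical
  induction s using Finset.induction_on with
  | empty => exact ⟨0, by simp [wt], by simp, by simp, by simp [hParAt]⟩
  | insert i s hi ih =>
    obtain ⟨nu, hwt, hcard, hmem, hprod⟩ := ih
    simp only [Finset.sum_insert hi, Finset.prod_insert hi, Finset.card_insert_of_notMem hi,
      Finset.forall_mem_insert]
    rcases (d i).eq_zero_or_pos with h0 | hpos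
    · exact ⟨nu, by rw [hwt, h0, zero_add], hcard.trans s.card.le_succ, ⟨Or.inl h0, hmem⟩,
        fun c => by rw [hprod, h0, hAt_zero, one_mul]⟩
    · obtain ⟨a, ha⟩ : ∃ a : ℕ+, (a : ℕ) = d i := ⟨⟨d i, hpos⟩, rfl⟩
      simp only [← ha]
      refine ⟨a ::ₘ nu, by rw [wt_cons, hwt], ?_, ⟨Or.inr ?_, ?_⟩, ?_⟩
      · simpa using hcard
      · exact ⟨a, Multiset.mem_cons_self _ _, rfl⟩
      · exact fun j hj => (hmem j hj).imp_right fun ⟨b, hb, h⟩ =>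
          ⟨b, Multiset.mem_cons_of_mem hb, h⟩
      · intro A _ _ c
        rw [← hprod, hParAt, Multiset.map_cons, Multiset.prod_cons, hParAt]

lemma prod_hAt_mem_image_nonRect {A : Type*} [CommRing A] [Algebra ℚ A] (c : ℕ+ → A)
    {l : ℕ} {r : ℕ+} {d : ℕ → ℕ} (hd : ∑ i ∈ Finset.range l, d i = l * r)
    (hne : ∃ i ∈ Finset.range l, d i ≠ r) :
    ∏ i ∈ Finset.range l, hAt c (d i) ∈ hParAt c '' nonRect l r := by
  obtain ⟨nu, hwt, hcard, hmem, hprod⟩ := exists_hParAt_eq_prod_hAt (Finset.range l) d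
  refine ⟨nu, ⟨hwt.trans hd, by rwa [Finset.card_range] at hcard, ?_⟩, hprod c⟩
  rintro rfl
  have hle : ∀ i ∈ Finset.range l, d i ≤ r := fun i hi => by
    rcases hmem i hi with h | ⟨a, ha, h⟩
    · simp [h]
    · rw [← h, Multiset.eq_of_mem_replicate ha]
  obtain ⟨i, hi, hir⟩ := hne
  refine hir ((Finset.sum_eq_sum_iff_of_le hle).mp ?_ i hi)
  rw [hd, Finset.sum_const, Finset.card_range, smul_eq_mul]

lemma X_mul_pSeries_eq_expand {A : Type*} [CommRing A] (l : ℕ+) {c d : ℕ+ → A}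
    (h0 : ∀ k : ℕ+, ¬ l ∣ k → d k = 0) (hd : ∀ k : ℕ+, d (l * k) = (l : ℕ) * c k) :
    PowerSeries.X * pSeries d =
      ((l : ℕ) : PowerSeries A) * (PowerSeries.X * pSeries c).expand l l.ne_zero := by
  have hcoeff : ∀ (e : ℕ+ → A) (k : ℕ+),
      PowerSeries.coeff (k : ℕ) (PowerSeries.X * pSeries e) = e k := fun e k => by
    obtain ⟨n, rfl⟩ : ∃ n : ℕ, k = n.succPNat := ⟨k.natPred, (PNat.succPNat_natPred k).symm⟩
    rw [Nat.succPNat_coe, Nat.succ_eq_add_one, PowerSeries.coeff_succ_X_mul, pSeries,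
      PowerSeries.coeff_mk]
  ext n
  rw [← nsmul_eq_mul, map_nsmul, nsmul_eq_mul]
  rcases n.eq_zero_or_pos with rfl | hn
  · simp
  lift n to ℕ+ using hn
  rw [hcoeff]
  by_cases h : l ∣ n
  · obtain ⟨k, rfl⟩ := h
    rw [hd, PNat.mul_coe, PowerSeries.coeff_expand_mul, hcoeff]
  · rw [h0 n h, PowerSeries.coeff_expand_of_not_dvd _ _ _ (mt PNat.dvd_iff.mpr h), mul_zero]

lemma hAt_mul_eq_of_support {A : Type*} [CommRing A] [Algebra ℚ A] (l : ℕ+) {c d : ℕ+ → A}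
    (h0 : ∀ k : ℕ+, ¬ l ∣ k → d k = 0) (hd : ∀ k : ℕ+, d (l * k) = (l : ℕ) * c k) (n : ℕ) :
    hAt d (l * n) = hAt c n := by
  suffices (hSeries c).expand l l.ne_zero = hSeries d by
    simpa [hSeries] using congrArg (PowerSeries.coeff ((l : ℕ) * n)) this.symm
  have hX : PowerSeries.HasSubst (PowerSeries.X ^ (l : ℕ) : PowerSeries A) :=
    PowerSeries.HasSubst.X_pow l.ne_zero
  refine eq_hSeries (PowerSeries.X_mul_cancel ?_) (by
    rw [PowerSeries.constantCoeff_expand, constantCoeff_hSeries])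
  rw [← mul_assoc, X_mul_pSeries_eq_expand l h0 hd, map_mul, PowerSeries.expand_X,
    PowerSeries.expand_apply, PowerSeries.derivative_subst hX, derivative_hSeries,
    ← PowerSeries.expand_apply l l.ne_zero, map_mul, PowerSeries.derivative_pow,
    PowerSeries.derivative_X, ← PowerSeries.expand_apply l l.ne_zero, mul_one]
  have hpow : (PowerSeries.X : PowerSeries A) * PowerSeries.X ^ ((l : ℕ) - 1) =
      PowerSeries.X ^ (l : ℕ) := mul_pow_sub_one l.ne_zero _
  linear_combination (((l : ℕ) : PowerSeries A) * PowerSeries.expand l l.ne_zero (pSeries c) *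
    PowerSeries.expand l l.ne_zero (hSeries c)) * hpow

variable {K : Type*} [CommRing K] [IsDomain K] {z : K}

lemma sum_pow_pow_of_isPrimitiveRoot {l : ℕ} (hz : IsPrimitiveRoot z l) (k : ℕ) :
    ∑ i ∈ Finset.range l, (z ^ i) ^ k = if l ∣ k then (l : K) else 0 := by
  simp only [pow_right_comm z _ k]
  split_ifs with h
  · simp [(hz.pow_eq_one_iff_dvd k).mpr h]
  · have hne : z ^ k - 1 ≠ 0 := sub_ne_zero.mpr (mt (hz.pow_eq_one_iff_dvd k).mp h)
    refine (mul_eq_zero.mp ?_).resolve_right hne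
    rw [geom_sum_mul, pow_right_comm, hz.pow_eq_one, one_pow, sub_self]

lemma prod_range_pow_of_isPrimitiveRoot {l : ℕ} (hl : 0 < l) (hz : IsPrimitiveRoot z l) :
    ∏ i ∈ Finset.range l, z ^ i = (-1) ^ (l - 1) := by
  classical
  have hroots : Polynomial.nthRoots l (1 : K) = (Multiset.range l).map (z ^ ·) := by
    simpa using hz.nthRoots_eq (one_pow l)
  have h := hz.pow_sub_pow_eq_prod_sub_mul 0 (-1) hl
  rw [Finset.prod, Polynomial.nthRootsFinset_def, Multiset.toFinset_val,
    hz.nthRoots_one_nodup.dedup, hroots, Multiset.map_map] at h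
  obtain ⟨m, rfl⟩ := Nat.exists_eq_succ_of_ne_zero hl.ne'
  simpa [Finset.prod, pow_succ] using h.symm

variable {A : Type*} [CommRing A] [Algebra K A] [Algebra ℚ A]

/-- Both sides are coefficients of `∏ i, H (z ^ i * x)`, whose power sums are `l * c k` at the
multiples of `l` and zero elsewhere. -/
lemma hAt_mul_eq_sum (l : ℕ+) (hz : IsPrimitiveRoot z l) (c : ℕ+ → A) (n : ℕ) :
    hAt (fun k => c (l * k)) n = ∑ d ∈ (Finset.range l).finsuppAntidiag (l * n),
      (∏ i ∈ Finset.range l, (z ^ i) ^ d i) • ∏ i ∈ Finset.range l, hAt c (d i) := by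
  set e : ℕ+ → A :=
    ∑ i ∈ Finset.range l, fun k : ℕ+ => algebraMap K A (z ^ i) ^ (k : ℕ) * c k with he
  have he_apply : ∀ k, e k = if (l : ℕ) ∣ k then ((l : ℕ) : A) * c k else 0 := fun k => by
    have h := congrArg (algebraMap K A) (sum_pow_pow_of_isPrimitiveRoot hz k)
    simp only [map_sum, map_pow, apply_ite (algebraMap K A), map_natCast, map_zero] at h
    simp only [he, Finset.sum_apply, ← Finset.sum_mul, map_pow, h, ite_mul, zero_mul]
  rw [← hAt_mul_eq_of_support l (d := e)
    (fun k hk => by rw [he_apply, if_neg (mt PNat.dvd_iff.mpr hk)])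
    (fun k => by rw [he_apply, if_pos (PNat.dvd_iff.mp (dvd_mul_right l k))]), he, hAt_sum]
  refine Finset.sum_congr rfl fun d _ => ?_
  simp only [hAt_pow_mul, Finset.prod_mul_distrib, Algebra.smul_def, map_prod, map_pow]

lemma neg_one_pow_smul_hAt_sub_hParAt_mem_span {l r : ℕ+} (hz : IsPrimitiveRoot z l)
    (c : ℕ+ → A) :
    (-1 : K) ^ (((l : ℕ) - 1) * r) • hAt (fun k => c (l * k)) r -
      hParAt c (Multiset.replicate l r) ∈ Submodule.span K (hParAt c '' nonRect l r) := by
  classical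
  set d₀ : ℕ →₀ ℕ := Finsupp.indicator (Finset.range l) fun _ _ => (r : ℕ) with hd₀
  have hd₀_apply : ∀ i ∈ Finset.range l, d₀ i = r := fun i hi =>
    Finsupp.indicator_of_mem hi _
  have hmem : d₀ ∈ (Finset.range l).finsuppAntidiag ((l : ℕ) * r) := by
    refine Finset.mem_finsuppAntidiag.mpr ⟨?_, Finsupp.support_indicator_subset _ _⟩
    rw [Finset.sum_congr rfl hd₀_apply, Finset.sum_const, Finset.card_range, smul_eq_mul]
  have hsign : (-1 : K) ^ (((l : ℕ) - 1) * r) * ∏ i ∈ Finset.range l, (z ^ i) ^ d₀ i = 1 := by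
    rw [Finset.prod_congr rfl fun i hi => by rw [hd₀_apply i hi], Finset.prod_pow,
      prod_range_pow_of_isPrimitiveRoot l.pos hz, ← pow_mul, ← mul_pow, neg_mul_neg, one_mul,
      one_pow]
  have hlead : ∏ i ∈ Finset.range l, hAt c (d₀ i) = hParAt c (Multiset.replicate l r) := by
    rw [Finset.prod_congr rfl fun i hi => by rw [hd₀_apply i hi], Finset.prod_const,
      Finset.card_range, hParAt, Multiset.map_replicate, Multiset.prod_replicate]
  rw [hAt_mul_eq_sum l hz, Finset.smul_sum, ← Finset.add_sum_erase _ _ hmem, smul_smul, hsign,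
    one_smul, hlead, add_sub_cancel_left]
  refine Submodule.sum_mem _ fun d hd => Submodule.smul_mem _ _ (Submodule.smul_mem _ _
    (Submodule.subset_span (prod_hAt_mem_image_nonRect c ?_ ?_)))
  · exact (Finset.mem_finsuppAntidiag.mp (Finset.mem_of_mem_erase hd)).1
  · by_contra! h
    refine Finset.ne_of_mem_erase hd (Finsupp.ext fun i => ?_)
    by_cases hi : i ∈ Finset.range l
    · rw [h i hi, hd₀_apply i hi]
    · have hsupp := (Finset.mem_finsuppAntidiag.mp (Finset.mem_of_mem_erase hd)).2
      rw [hd₀, Finsupp.indicator_of_notMem hi, Finsupp.notMem_support_iff.mp fun h => hi (hsupp h)]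

end Plethysm

section Radical

variable {R : Type} [CommRing R] [Algebra ℚ R]

lemma zForm_hAt_X_mul_eq_zero {κ : ℕ+ → R} {l : ℕ+} (hκ : ∀ k, κ (l * k) = 0) (r : ℕ+)
    (g : SymFn R) : zForm κ (hAt (fun k => X (l * k)) r) g = 0 := by
  obtain ⟨n, rfl⟩ : ∃ n : ℕ, r = n.succPNat := ⟨r.natPred, (PNat.succPNat_natPred r).symm⟩
  have := IsAddTorsionFree.of_module_rat R
  refine (nsmul_eq_zero_iff_right n.succ_ne_zero).mp ?_
  rw [← LinearMap.smul_apply, ← map_nsmul, nsmul_eq_mul, Nat.cast_succ, Nat.succPNat_coe,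
    Nat.succ_eq_add_one, succ_mul_hAt_succ, map_sum, LinearMap.sum_apply]
  exact Finset.sum_eq_zero fun i _ => by rw [zForm_X_mul, hκ, zero_mul]

end Radical

section Regular

/-- Partitions in which no part is repeated `l` or more times. -/
def IsRegular (l : ℕ) (mu : Multiset ℕ+) : Prop :=
  ∀ a, mu.count a < l

lemma isRegular_of_mem_nonRect {l : ℕ} {r : ℕ+} {nu : Multiset ℕ+} (h : nu ∈ nonRect l r) :
    IsRegular l nu := by
  intro a
  obtain ⟨hwt, hcard, hne⟩ := h
  by_contra! hle
  rw [Multiset.le_count_iff_replicate_le] at hle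
  obtain rfl := (Multiset.eq_of_le_of_card_le hle (by rwa [Multiset.card_replicate])).symm
  rw [wt_replicate] at hwt
  rcases l.eq_zero_or_pos with rfl | hl
  · exact hne rfl
  · exact hne (by rw [PNat.coe_injective (Nat.eq_of_mul_eq_mul_left hl hwt)])

/-- The sum of the squares of the parts. -/
def sumSq (mu : Multiset ℕ+) : ℕ := (mu.map fun a : ℕ+ => (a : ℕ) ^ 2).sum

lemma sumSq_add (mu nu : Multiset ℕ+) : sumSq (mu + nu) = sumSq mu + sumSq nu := by
  simp [sumSq]

lemma sumSq_le_wt_sq (mu : Multiset ℕ+) : sumSq mu ≤ wt mu ^ 2 := by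
  induction mu using Multiset.induction_on with
  | empty => simp [sumSq]
  | cons a mu ih =>
    rw [← Multiset.singleton_add, sumSq_add, wt_add, add_sq]
    simp only [sumSq, wt, Multiset.map_singleton, Multiset.sum_singleton] at ih ⊢
    omega

lemma sum_map_sub_sq (b : ℤ) (mu : Multiset ℕ+) :
    (mu.map fun a : ℕ+ => ((a : ℕ) - b) ^ 2).sum =
      sumSq mu - 2 * b * wt mu + Multiset.card mu * b ^ 2 := by
  induction mu using Multiset.induction_on with
  | empty => simp [sumSq, wt]
  | cons a mu ih =>
    simp only [sumSq, wt, Multiset.map_cons, Multiset.sum_cons, Multiset.card_cons, Nat.cast_add,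
      Nat.cast_pow, Nat.cast_one] at ih ⊢
    linear_combination ih

lemma sumSq_replicate_lt {l : ℕ} {r : ℕ+} {nu : Multiset ℕ+} (h : nu ∈ nonRect l r) :
    sumSq (Multiset.replicate l r) < sumSq nu := by
  obtain ⟨hwt, hcard, hne⟩ := h
  rw [sumSq, Multiset.map_replicate, Multiset.sum_replicate, smul_eq_mul]
  have hdev := sum_map_sub_sq (r : ℕ) nu
  have hnonneg : ∀ x ∈ nu.map fun a : ℕ+ => (((a : ℕ) : ℤ) - (r : ℕ)) ^ 2, 0 ≤ x := by
    simp only [Multiset.mem_map]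
    rintro _ ⟨a, -, rfl⟩
    positivity
  have hr : (0 : ℤ) < ((r : ℕ) : ℤ) ^ 2 := by positivity
  rw [hwt] at hdev
  push_cast at hdev
  zify
  rcases hcard.lt_or_eq with hlt | heq
  · have := Multiset.sum_nonneg hnonneg
    have : (Multiset.card nu : ℤ) * (r : ℕ) ^ 2 < l * (r : ℕ) ^ 2 := by gcongr
    linarith
  · suffices 0 < (nu.map fun a : ℕ+ => (((a : ℕ) : ℤ) - (r : ℕ)) ^ 2).sum by
      rw [heq] at hdev
      linarith
    refine (Multiset.sum_nonneg hnonneg).lt_of_ne' fun h0 => hne ?_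
    refine Multiset.eq_replicate.mpr ⟨heq, fun a ha => PNat.coe_injective ?_⟩
    have ha0 := Multiset.all_zero_of_le_zero_le_of_sum_eq_zero hnonneg h0 _
      (Multiset.mem_map_of_mem _ ha)
    exact Nat.cast_injective (sub_eq_zero.mp (eq_zero_of_pow_eq_zero ha0))

lemma hAt_zero_of_pos {A : Type*} [CommRing A] [Algebra ℚ A] (r : ℕ+) :
    hAt (0 : ℕ+ → A) r = 0 := by
  have h := congrArg (PowerSeries.coeff (r : ℕ)) (hSeries_zero (S := A))
  rwa [hSeries, PowerSeries.coeff_mk, PowerSeries.coeff_one, if_neg r.ne_zero] at h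

variable {K : Type*} [CommRing K] [IsDomain K] {z : K}
  {A : Type*} [CommRing A] [Algebra K A] [Algebra ℚ A]

lemma hParAt_replicate_mem_span_nonRect {l : ℕ+} (hz : IsPrimitiveRoot z l) {c : ℕ+ → A}
    (hc : ∀ k, c (l * k) = 0) (r : ℕ+) :
    hParAt c (Multiset.replicate l r) ∈ Submodule.span K (hParAt c '' nonRect l r) := by
  have h := neg_one_pow_smul_hAt_sub_hParAt_mem_span hz c (r := r)
  rw [show (fun k => c (l * k)) = 0 from funext hc, hAt_zero_of_pos, smul_zero, zero_sub] at h
  exact (Submodule.neg_mem_iff _).mp h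

/-- Replacing a rectangle `(r^l)` inside `μ` by other partitions of `l r` with at most `l` parts
increases the sum of squares, so repeated replacement terminates. -/
lemma hParAt_mem_span_isRegular {l : ℕ+} (hz : IsPrimitiveRoot z l) {c : ℕ+ → A}
    (hc : ∀ k, c (l * k) = 0) (mu : Multiset ℕ+) :
    hParAt c mu ∈ Submodule.span K (hParAt c '' {nu | wt nu = wt mu ∧ IsRegular l nu}) := by
  induction h : wt mu ^ 2 - sumSq mu using Nat.strong_induction_on generalizing mu with
  | _ m ih =>
  by_cases hreg : IsRegular l mu
  · exact Submodule.subset_span ⟨mu, ⟨rfl, hreg⟩, rfl⟩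
  obtain ⟨r, hr⟩ : ∃ r, (l : ℕ) ≤ mu.count r := by simpa [IsRegular] using hreg
  obtain ⟨rho, rfl⟩ := Multiset.le_iff_exists_add.mp (Multiset.le_count_iff_replicate_le.mp hr)
  rw [hParAt_add]
  refine Submodule.mem_comap.mp ((Submodule.span_le (p := Submodule.comap
    (LinearMap.mulRight K (hParAt c rho)) _)).mpr ?_ (hParAt_replicate_mem_span_nonRect hz hc r))
  rintro _ ⟨nu, hnu, rfl⟩
  have hwt : wt (nu + rho) = wt (Multiset.replicate (l : ℕ) r + rho) := by
    rw [wt_add, wt_add, hnu.1, wt_replicate]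
  have hlt : sumSq (Multiset.replicate (l : ℕ) r + rho) < sumSq (nu + rho) := by
    rw [sumSq_add, sumSq_add]
    exact Nat.add_lt_add_right (sumSq_replicate_lt hnu) _
  have hle := sumSq_le_wt_sq (nu + rho)
  have := ih _ (by rw [hwt] at hle ⊢; omega) (nu + rho) rfl
  rwa [hwt, hParAt_add] at this

end Regular

section Glaisher

lemma exists_equiv_partition (n : ℕ) :
    ∃ e : {mu : Multiset ℕ+ // wt mu = n} ≃ n.Partition,
      ∀ mu, (e mu).parts = mu.1.map fun a : ℕ+ => (a : ℕ) := by
  refine ⟨Equiv.ofBijective (fun mu => ⟨mu.1.map fun a : ℕ+ => (a : ℕ), ?_, mu.2⟩) ⟨?_, ?_⟩, ?_⟩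
  · rintro i hi
    obtain ⟨a, -, rfl⟩ := Multiset.mem_map.mp hi
    exact a.pos
  · exact fun mu nu h => Subtype.ext
      (Multiset.map_injective PNat.coe_injective (congrArg Nat.Partition.parts h))
  · rintro ⟨parts, hpos, hsum⟩
    lift parts to Multiset ℕ+ using fun i hi => hpos hi
    exact ⟨⟨parts, hsum⟩, rfl⟩
  · exact fun _ => rfl

lemma finite_wt_eq (n : ℕ) : {mu : Multiset ℕ+ | wt mu = n}.Finite :=
  Set.finite_coe_iff.mp (Finite.of_equiv _ (exists_equiv_partition n).choose.symm)

lemma ncard_isRegular {l : ℕ} (hl : 0 < l) (n : ℕ) :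
    {mu | wt mu = n ∧ IsRegular l mu}.ncard = {mu | wt mu = n ∧ ∀ a ∈ mu, ¬ l ∣ (a : ℕ)}.ncard := by
  obtain ⟨e, he⟩ := exists_equiv_partition n
  have hcard : ∀ (p : Multiset ℕ+ → Prop) (s : Finset n.Partition),
      (∀ mu, p mu.1 ↔ e mu ∈ s) → {mu | wt mu = n ∧ p mu}.ncard = s.card := by
    intro p s h
    rw [← Nat.card_coe_set_eq, ← Set.ncard_coe_finset, ← Nat.card_coe_set_eq]
    exact Nat.card_congr ((Equiv.subtypeSubtypeEquivSubtypeInter _ p).symm.trans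
      (e.subtypeEquiv h))
  rw [hcard _ (Nat.Partition.countRestricted n l), hcard _ (Nat.Partition.restricted n (¬ l ∣ ·)),
    Nat.Partition.card_restricted_eq_card_countRestricted n hl]
  · simp [Nat.Partition.restricted, he]
  · intro mu
    have hnot : ∀ a ∉ mu.1, mu.1.count a < l := fun a ha => by
      rwa [Multiset.count_eq_zero_of_notMem ha]
    simp only [Nat.Partition.countRestricted, Finset.mem_filter_univ, he, Multiset.mem_map,
      forall_exists_index, and_imp, forall_apply_eq_imp_iff₂,
      Multiset.count_map_eq_count' _ _ PNat.coe_injective]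
    exact forall_congr' fun a => ⟨fun h _ => h, fun h => by_cases h (hnot a)⟩

/-- The power sums, with `p_k` replaced by zero when `l ∣ k`. -/
def dropMultiples (R : Type) [CommRing R] (l : ℕ) (k : ℕ+) : SymFn R :=
  if l ∣ k then 0 else X k

lemma linearIndependent_of_card_le {K V ι κ : Type*} [Field K] [AddCommGroup V] [Module K V]
    [Finite ι] [Finite κ] {v : ι → V} {w : κ → V} (hw : LinearIndependent K w)
    (hcard : Nat.card ι ≤ Nat.card κ) (hle : Set.range w ⊆ Submodule.span K (Set.range v)) :
    LinearIndependent K v := by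
  have := Fintype.ofFinite ι
  have := Fintype.ofFinite κ
  have := Module.Finite.span_of_finite K (Set.finite_range v)
  rw [Nat.card_eq_fintype_card, Nat.card_eq_fintype_card, ← finrank_span_eq_card hw] at hcard
  exact linearIndependent_iff_card_le_finrank_span.mpr
    (hcard.trans (Submodule.finrank_mono (Submodule.span_le.mpr hle)))

variable {K : Type} [Field K]

lemma linearIndepOn_prod_map_dropMultiples (l : ℕ) :
    LinearIndepOn K (fun mu : Multiset ℕ+ => (mu.map (dropMultiples K l)).prod)
      {mu | ∀ a ∈ mu, ¬ l ∣ (a : ℕ)} := by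
  have h : ∀ mu ∈ {mu : Multiset ℕ+ | ∀ a ∈ mu, ¬ l ∣ (a : ℕ)},
      basisMonomials ℕ+ K (Multiset.toFinsupp mu) = (mu.map (dropMultiples K l)).prod := by
    intro mu hmu
    have hX : mu.map (dropMultiples K l) = mu.map X :=
      Multiset.map_congr rfl fun a ha => if_neg (hmu a ha)
    rw [hX, coe_basisMonomials, ← Multiset.toFinsupp_toMultiset mu, prod_map_X_toMultiset,
      Multiset.toFinsupp_toMultiset]
  exact (((basisMonomials ℕ+ K).linearIndependent.comp _
    Multiset.toFinsupp.injective).linearIndepOn _).congr h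

/-- The `l`-regular `h_ν` span the ring modulo the `p_k` with `l ∣ k`, and by Glaisher's theorem
there are no more of them than monomials in the remaining power sums. -/
lemma linearIndepOn_hParAt_dropMultiples [CharZero K] {z : K} {l : ℕ+}
    (hz : IsPrimitiveRoot z l) (n : ℕ) :
    LinearIndepOn K (hParAt (dropMultiples K l)) {nu | wt nu = n ∧ IsRegular l nu} := by
  have hfin : ∀ p : Multiset ℕ+ → Prop, Finite {mu | wt mu = n ∧ p mu} := fun p =>
    ((finite_wt_eq n).subset fun mu hmu => hmu.1).to_subtype
  have hmono : LinearIndepOn K (fun mu : Multiset ℕ+ => (mu.map (dropMultiples K l)).prod)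
      {mu | wt mu = n ∧ ∀ a ∈ mu, ¬ (l : ℕ) ∣ a} :=
    (linearIndepOn_prod_map_dropMultiples l).mono fun mu hmu => hmu.2
  refine linearIndependent_of_card_le hmono (ncard_isRegular l.pos n).le ?_
  rintro _ ⟨⟨mu, rfl, -⟩, rfl⟩
  refine (Submodule.span_le.mpr ?_ : hSpan K _ _ ≤ _) (prod_map_mem_hSpan mu)
  rintro _ ⟨nu, hnu, rfl⟩
  have hc : ∀ k, dropMultiples K l (l * k) = 0 := fun k =>
    if_pos (PNat.dvd_iff.mp (dvd_mul_right l k))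
  rw [← hnu, ← Set.image_eq_range]
  exact hParAt_mem_span_isRegular hz hc nu

end Glaisher

section RegularAt

variable {K : Type*} [Field K]

/-- The local ring of rational functions without a pole at `c`. -/
def regularAt (c : K) : Subalgebra K (RatFunc K) where
  carrier := {x | x.denom.eval c ≠ 0}
  mul_mem' {x y} hx hy h := mul_ne_zero hx hy <| by
    rw [← Polynomial.eval_mul]
    exact Polynomial.eval_eq_zero_of_dvd_of_eval_eq_zero (RatFunc.denom_mul_dvd x y) h
  add_mem' {x y} hx hy h := mul_ne_zero hx hy <| by
    rw [← Polynomial.eval_mul]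
    exact Polynomial.eval_eq_zero_of_dvd_of_eval_eq_zero (RatFunc.denom_add_dvd x y) h
  algebraMap_mem' a := by
    simp [RatFunc.algebraMap_eq_C]

lemma mem_regularAt {c : K} {x : RatFunc K} : x ∈ regularAt c ↔ x.denom.eval c ≠ 0 := Iff.rfl

instance [CharZero K] (c : K) : Algebra ℚ (regularAt c) :=
  Algebra.compHom _ (algebraMap ℚ K)

/-- The value at `c` of a rational function without a pole there. -/
def evalAt (c : K) : regularAt c →+* K where
  toFun x := RatFunc.eval (RingHom.id K) c x
  map_one' := RatFunc.eval_one _ _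
  map_mul' x y := RatFunc.eval_mul _ _ x.2 y.2
  map_zero' := RatFunc.eval_zero _ _
  map_add' x y := RatFunc.eval_add _ _ x.2 y.2

lemma evalAt_apply (c : K) (x : regularAt c) :
    evalAt c x = RatFunc.eval (RingHom.id K) c x := rfl

lemma evalAt_algebraMap (c a : K) : evalAt c (algebraMap K _ a) = a :=
  RatFunc.eval_C _ _

/-- The indeterminate, as a function without a pole at `c`. -/
def regularX (c : K) : regularAt c :=
  ⟨RatFunc.X, by simp [mem_regularAt]⟩

lemma evalAt_regularX (c : K) : evalAt c (regularX c) = c :=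
  RatFunc.eval_X _ _

lemma isUnit_of_evalAt_ne_zero {c : K} {x : regularAt c} (h : evalAt c x ≠ 0) : IsUnit x := by
  have hx : (x : RatFunc K) ≠ 0 := fun h0 => h (by rw [evalAt_apply, h0, RatFunc.eval_zero])
  have hnum : (x : RatFunc K).num.eval c ≠ 0 := (div_ne_zero_iff.mp h).1
  have hinv : (x : RatFunc K)⁻¹ ∈ regularAt c := fun h0 => hnum
    (Polynomial.eval_eq_zero_of_dvd_of_eval_eq_zero (RatFunc.denom_inv_dvd hx) h0)
  exact IsUnit.of_mul_eq_one ⟨_, hinv⟩ (Subtype.ext (mul_inv_cancel₀ hx))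

lemma one_sub_X_pow_ne_zero {n : ℕ} (hn : n ≠ 0) : 1 - (RatFunc.X : RatFunc K) ^ n ≠ 0 := by
  rw [← RatFunc.algebraMap_X, ← map_pow, ← map_one (algebraMap (Polynomial K) (RatFunc K)),
    ← map_sub]
  refine (map_ne_zero_iff _ (RatFunc.algebraMap_injective K)).mpr (sub_ne_zero.mpr fun h => ?_)
  simpa [hn.symm] using congrArg Polynomial.natDegree h

end RegularAt

lemma specT_map (c : KK) (f : SymFn (regularAt c)) :
    specT c (map (algebraMap (regularAt c) FF) f) = map (evalAt c) f := by
  ext m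
  simp only [specT, coeff_sum, coeff_monomial, Finset.sum_ite_eq']
  split_ifs with h
  · rw [coeff_map, coeff_map]
    rfl
  · have hm : coeff m f = 0 := by
      rwa [notMem_support_iff, coeff_map, FaithfulSMul.algebraMap_eq_zero_iff] at h
    rw [coeff_map, hm, map_zero]

section Gram

variable {R : Type} [CommRing R] {ι : Type*}

/-- The Gram matrix of a family of symmetric functions for the form `zForm κ`. -/
def gramMatrix (κ : ℕ+ → R) (v : ι → SymFn R) : Matrix ι ι R :=
  Matrix.of fun i j => zForm κ (v i) (v j)

/-- `x` is a component of `w` orthogonal to the family `v`: it differs from `w` by an element of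
the span of `v` and is orthogonal to `v` for the form `zForm κ`. -/
structure IsResidual (κ : ℕ+ → R) (v : ι → SymFn R) (w x : SymFn R) : Prop where
  sub_mem_span : x - w ∈ Submodule.span R (Set.range v)
  orthogonal : ∀ i, zForm κ x (v i) = 0

variable [Fintype ι]

lemma gramMatrix_mulVec (κ : ℕ+ → R) (v : ι → SymFn R) (a : ι → R) :
    (gramMatrix κ v).mulVec a = fun i => zForm κ (v i) (∑ j, a j • v j) := by
  funext i
  simp only [gramMatrix, Matrix.mulVec, dotProduct, Matrix.of_apply, map_sum, map_smul,
    smul_eq_mul, mul_comm]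

variable [DecidableEq ι]

/-- The residual of `w` along `v` multiplied by the Gram determinant, as given by Cramer's rule. -/
def cramerResidual (κ : ℕ+ → R) (v : ι → SymFn R) (w : SymFn R) : SymFn R :=
  (gramMatrix κ v).det • w -
    ∑ i, (gramMatrix κ v).cramer (fun j => zForm κ (v j) w) i • v i

/-- The residual of `w` along `v`, provided the Gram determinant is a unit (otherwise zero). -/
def residual (κ : ℕ+ → R) (v : ι → SymFn R) (w : SymFn R) : SymFn R :=
  Ring.inverse (gramMatrix κ v).det • cramerResidual κ v w

lemma IsResidual.det_smul_eq {κ : ℕ+ → R} {v : ι → SymFn R} {w x : SymFn R}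
    (h : IsResidual κ v w x) : (gramMatrix κ v).det • x = cramerResidual κ v w := by
  obtain ⟨a, ha⟩ := (Submodule.mem_span_range_iff_exists_fun R).mp h.sub_mem_span
  have hx : x = w + ∑ i, a i • v i := by rw [ha, add_sub_cancel]
  have hG : (fun j => zForm κ (v j) w) = - ((gramMatrix κ v).mulVec a) := by
    funext j
    rw [gramMatrix_mulVec, Pi.neg_apply, eq_neg_iff_add_eq_zero, ← map_add, ← hx, zForm_comm,
      h.orthogonal]
  have hcramer : (gramMatrix κ v).cramer (fun j => zForm κ (v j) w) =
      - ((gramMatrix κ v).det • a) := by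
    rw [hG, map_neg, Matrix.cramer_eq_adjugate_mulVec, Matrix.mulVec_mulVec,
      Matrix.adjugate_mul, Matrix.smul_mulVec, Matrix.one_mulVec]
  simp only [cramerResidual, hcramer, hx, Pi.neg_apply, Pi.smul_apply, smul_eq_mul, neg_smul,
    Finset.sum_neg_distrib, sub_neg_eq_add, smul_add, Finset.smul_sum, mul_smul]

variable {S : Type} [CommRing S] (φ : R →+* S) (κ : ℕ+ → R) (v : ι → SymFn R) (w : SymFn R)

lemma map_gramMatrix :
    φ.mapMatrix (gramMatrix κ v) = gramMatrix (fun k => φ (κ k)) fun i => map φ (v i) := by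
  ext i j
  exact map_zForm φ κ (v i) (v j)

lemma map_cramerResidual : map φ (cramerResidual κ v w) =
    cramerResidual (fun k => φ (κ k)) (fun i => map φ (v i)) (map φ w) := by
  simp only [cramerResidual, ← map_gramMatrix, ← map_zForm, Matrix.cramer_eq_adjugate_mulVec,
    ← RingHom.map_det, ← RingHom.map_adjugate, map_sub, map_sum, smul_eq_C_mul, map_mul, map_C]
  congr! 4 with i
  exact RingHom.map_mulVec φ _ _ i

lemma map_residual {x : SymFn S} (hdet : IsUnit (gramMatrix κ v).det)
    (hx : IsResidual (fun k => φ (κ k)) (fun i => map φ (v i)) (map φ w) x) :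
    map φ (residual κ v w) = x := by
  rw [residual, smul_eq_C_mul, map_mul, map_C, map_cramerResidual, ← hx.det_smul_eq,
    ← map_gramMatrix, ← RingHom.map_det, ← smul_eq_C_mul, smul_smul,
    ← map_mul, Ring.inverse_mul_cancel _ hdet, map_one, one_smul]

end Gram

section Nondegenerate

variable {ι : Type*} [Fintype ι] [DecidableEq ι]

lemma det_gramMatrix_ne_zero {R : Type} [Field R] [LinearOrder R] [IsStrictOrderedRing R]
    {κ : ℕ+ → R} (hκ : ∀ k, 0 < κ k) (c : ℕ+ → R) {v : ι → SymFn R}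
    (hv : LinearIndependent R fun i => scaleHom c (v i)) :
    (gramMatrix (fun k => c k * (c k * κ k)) v).det ≠ 0 := by
  intro hdet
  obtain ⟨a, ha0, ha⟩ := Matrix.exists_mulVec_eq_zero_iff.mpr hdet
  rw [gramMatrix_mulVec] at ha
  have hself : zForm κ (scaleHom c (∑ j, a j • v j)) (scaleHom c (∑ j, a j • v j)) = 0 := by
    rw [zForm_scaleHom, zForm_comm, zForm_scaleHom, zForm_comm, map_sum]
    refine Finset.sum_eq_zero fun i _ => ?_
    rw [map_smul, zForm_comm, congrFun ha i, Pi.zero_apply, smul_zero]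
  have hzero := eq_zero_of_zForm_self_eq_zero hκ hself
  simp only [map_sum, map_smul] at hzero
  exact ha0 (funext (Fintype.linearIndependent_iff.mp hv a hzero))

end Nondegenerate

section Rectangle

instance (l : ℕ) (r : ℕ+) : Fintype (nonRect l r) :=
  ((finite_wt_eq (l * r)).subset fun _ h => h.1).fintype

/-- The family of all `h_ν` of degree `l * r` with at most `l` factors, except `h_(r^l)`. -/
def hNonRect (R : Type) [CommRing R] [Algebra ℚ R] (l : ℕ) (r : ℕ+) (nu : nonRect l r) :
    SymFn R :=
  hParAt X nu.1

section Ring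

variable {R S : Type} [CommRing R] [Algebra ℚ R] [CommRing S] [Algebra ℚ S]

lemma map_hParAt_X (φ : R →+* S) (mu : Multiset ℕ+) :
    map φ (hParAt X mu) = hParAt (X : ℕ+ → SymFn S) mu := by
  rw [map_hParAt]
  simp only [map_X]

lemma map_hNonRect (φ : R →+* S) (l : ℕ) (r : ℕ+) :
    (fun nu => map φ (hNonRect R l r nu)) = hNonRect S l r :=
  funext fun nu => map_hParAt_X φ nu.1

lemma map_det_gramMatrix_hNonRect (φ : R →+* S) (κ : ℕ+ → R) (l : ℕ) (r : ℕ+) :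
    φ (gramMatrix κ (hNonRect R l r)).det =
      (gramMatrix (fun k => φ (κ k)) (hNonRect S l r)).det := by
  rw [RingHom.map_det, map_gramMatrix, map_hNonRect]

lemma map_residual_hNonRect (φ : R →+* S) {κ : ℕ+ → R} {l : ℕ} {r : ℕ+} {x : SymFn S}
    (hdet : IsUnit (gramMatrix κ (hNonRect R l r)).det)
    (hx : IsResidual (fun k => φ (κ k)) (hNonRect S l r) (hParAt X (Multiset.replicate l r)) x) :
    map φ (residual κ (hNonRect R l r) (hParAt X (Multiset.replicate l r))) = x := by
  rw [← map_hNonRect φ, ← map_hParAt_X φ] at hx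
  exact map_residual φ κ _ _ hdet hx

lemma isResidual_hAt_X_mul [IsDomain R] {l : ℕ+} {z : R} (hz : IsPrimitiveRoot z l)
    {κ : ℕ+ → R} (hκ : ∀ k, κ (l * k) = 0) (r : ℕ+) :
    IsResidual κ (hNonRect R l r) (hParAt X (Multiset.replicate l r))
      ((-1 : R) ^ (((l : ℕ) - 1) * r) • hAt (fun k => X (l * k)) r) where
  sub_mem_span := by
    have h := neg_one_pow_smul_hAt_sub_hParAt_mem_span (r := r) hz (X : ℕ+ → SymFn R)
    rwa [Set.image_eq_range] at h
  orthogonal nu := by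
    rw [map_smul, LinearMap.smul_apply, zForm_hAt_X_mul_eq_zero hκ, smul_zero]

end Ring

lemma isResidual_Qprime {R : Type} [Field R] [CharZero R] {q t : R} {P : Multiset ℕ+ → SymFn R}
    (hP : IsMacdonaldBasis q t P) (hq : ∀ k : ℕ+, 1 - q ^ (k : ℕ) ≠ 0)
    (ht : ∀ k : ℕ+, 1 - t ^ (k : ℕ) ≠ 0) (l : ℕ) (r : ℕ+) :
    IsResidual (fun k => (1 - t ^ (k : ℕ)) / (1 - q ^ (k : ℕ)) * (k : ℕ)) (hNonRect R l r)
      (hParAt X (Multiset.replicate l r)) (Qprime q t P (Multiset.replicate l r)) where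
  sub_mem_span := by
    have h := Qprime_rect_sub_hParAt_mem_span hP hq ht l r
    rwa [Set.image_eq_range] at h
  orthogonal nu := zForm_Qprime_rect_eq_zero hP hq ht nu.2

end Rectangle

section Nonvanishing

lemma linearIndependent_hParAt_dropMultiples_rat (l r : ℕ+) :
    LinearIndependent ℚ fun nu : nonRect l r => hParAt (dropMultiples ℚ l) nu.1 := by
  have hC := linearIndepOn_hParAt_dropMultiples (Complex.isPrimitiveRoot_exp l l.ne_zero) (l * r)
  have hC' : LinearIndependent ℂ fun nu : nonRect l r => hParAt (dropMultiples ℂ l) nu.1 :=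
    hC.mono fun nu hnu => ⟨hnu.1, isRegular_of_mem_nonRect hnu⟩
  have hmap : ∀ k, mapAlgHom (Algebra.ofId ℚ ℂ) (dropMultiples ℚ l k) = dropMultiples ℂ l k := by
    intro k
    unfold dropMultiples
    split_ifs <;> simp
  refine LinearIndependent.of_comp (mapAlgHom (Algebra.ofId ℚ ℂ)).toLinearMap ?_
  have hcomp : (fun nu : nonRect l r => hParAt (dropMultiples ℂ l) nu.1) =
      (mapAlgHom (Algebra.ofId ℚ ℂ)).toLinearMap ∘
        fun nu : nonRect l r => hParAt (dropMultiples ℚ l) nu.1 := by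
    funext nu
    have h := map_hParAt (mapAlgHom (σ := ℕ+) (Algebra.ofId ℚ ℂ) : _ →+* SymFn ℂ)
      (dropMultiples ℚ l) nu.1
    refine .trans ?_ h.symm
    exact congrArg (hParAt · nu.1) (funext fun k => (hmap k).symm)
  rw [← hcomp]
  exact hC'.restrict_scalars (R := ℚ) fun a b h => by simpa using h

lemma det_gramMatrix_dropMultiples_ne_zero (R : Type) [Field R] [CharZero R] (l r : ℕ+) :
    (gramMatrix (fun k => if (l : ℕ) ∣ k then 0 else ((k : ℕ) : R)) (hNonRect R l r)).det ≠ 0 := by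
  set c : ℕ+ → ℚ := fun k => if (l : ℕ) ∣ k then 0 else 1 with hc
  have hX : ∀ nu, scaleHom c (hParAt X nu) = hParAt (dropMultiples ℚ l) nu := fun nu => by
    have h := map_hParAt (scaleHom c : SymFn ℚ →+* SymFn ℚ) X nu
    refine h.trans (congrArg (hParAt · nu) (funext fun k => ?_))
    simp [scaleHom, hc, dropMultiples]
  have hind : LinearIndependent ℚ fun nu => scaleHom c (hNonRect ℚ l r nu) := by
    simpa only [hNonRect, hX] using linearIndependent_hParAt_dropMultiples_rat l r
  have hdet := det_gramMatrix_ne_zero (κ := fun k => ((k : ℕ) : ℚ)) (fun k => by simp) c hind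
  have hκ : (fun k : ℕ+ => if (l : ℕ) ∣ k then 0 else ((k : ℕ) : R)) =
      fun k => algebraMap ℚ R (c k * (c k * (k : ℕ))) := by
    funext k
    simp only [hc]
    split_ifs <;> simp
  rw [hκ, ← map_det_gramMatrix_hNonRect (algebraMap ℚ R)]
  exact (map_ne_zero _).mpr hdet

variable {k : Type} [Field k] {z : k} {l : ℕ+}

lemma exists_regular_lift (hz : IsPrimitiveRoot z l) (j : ℕ+) :
    ∃ κ : regularAt z, algebraMap (regularAt z) (RatFunc k) κ =
        (1 - RatFunc.C z ^ (j : ℕ)) / (1 - RatFunc.X ^ (j : ℕ)) * ((j : ℕ) : RatFunc k) ∧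
      evalAt z κ = if (l : ℕ) ∣ j then 0 else ((j : ℕ) : k) := by
  split_ifs with hj
  · refine ⟨0, ?_, map_zero _⟩
    rw [← map_pow, (hz.pow_eq_one_iff_dvd _).mpr hj, map_one, sub_self, zero_div, zero_mul,
      map_zero]
  · have hzj : 1 - z ^ (j : ℕ) ≠ 0 :=
      sub_ne_zero.mpr fun h => hj ((hz.pow_eq_one_iff_dvd _).mp h.symm)
    have heval : evalAt z (1 - regularX z ^ (j : ℕ)) = 1 - z ^ (j : ℕ) := by
      rw [map_sub, map_pow, map_one, evalAt_regularX]
    obtain ⟨u, hu⟩ := isUnit_of_evalAt_ne_zero (heval.trans_ne hzj)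
    refine ⟨algebraMap k _ (1 - z ^ (j : ℕ)) * ↑u⁻¹ * (j : ℕ), ?_, ?_⟩
    · simp only [map_mul, map_units_inv, hu, map_natCast, map_sub, map_one, map_pow,
        ← IsScalarTower.algebraMap_apply, RatFunc.algebraMap_eq_C, div_eq_mul_inv]
      rfl
    · rw [map_mul, map_mul, map_units_inv, hu, heval, map_natCast, evalAt_algebraMap]
      simp [hzj]

/-- As `q → z` the weight `j * (1 - z ^ j) / (1 - q ^ j)` tends to `j`, or to `0` if `l ∣ j`. -/
lemma det_gramMatrix_root_of_unity_ne_zero [CharZero k] (hz : IsPrimitiveRoot z l) (r : ℕ+) :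
    (gramMatrix (fun j : ℕ+ => (1 - RatFunc.C z ^ (j : ℕ)) / (1 - RatFunc.X ^ (j : ℕ)) *
      ((j : ℕ) : RatFunc k)) (hNonRect (RatFunc k) l r)).det ≠ 0 := by
  choose κ hκ hκ_eval using exists_regular_lift hz
  simp only [← hκ]
  rw [← map_det_gramMatrix_hNonRect (algebraMap (regularAt z) (RatFunc k)),
    map_ne_zero_iff _ (FaithfulSMul.algebraMap_injective _ _)]
  intro hdet
  have heval := map_det_gramMatrix_hNonRect (evalAt z) κ l r
  rw [hdet, map_zero] at heval
  refine det_gramMatrix_dropMultiples_ne_zero k l r ?_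
  simpa only [← hκ_eval] using heval.symm

end Nonvanishing

lemma plethP_hsym {R : Type} [Field R] [CharZero R] (l : ℕ+) (n : ℕ) :
    plethP l (hsym (R := R) n) = hAt (fun k => X (l * k)) n := by
  rw [hsym_eq_hAt]
  refine (map_hAt (plethP (R := R) l : SymFn R →+* SymFn R) X n).trans ?_
  exact congrArg (hAt · n) (funext fun k => aeval_X _ k)

/-- The weight `k * (1 - t ^ k) / (1 - q ^ k)`, as a function of `t` without a pole at `c`. -/
def regularWeight {K : Type*} [Field K] (q c : K) (k : ℕ+) : regularAt c :=
  (1 - regularX c ^ (k : ℕ)) * algebraMap K _ (1 - q ^ (k : ℕ))⁻¹ * (k : ℕ)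

lemma algebraMap_regularWeight {K : Type*} [Field K] (q c : K) (k : ℕ+) :
    algebraMap (regularAt c) (RatFunc K) (regularWeight q c k) =
      (1 - RatFunc.X ^ (k : ℕ)) / (1 - RatFunc.C q ^ (k : ℕ)) * ((k : ℕ) : RatFunc K) := by
  simp only [regularWeight, map_mul, map_natCast, map_sub, map_one, map_pow, map_inv₀,
    ← IsScalarTower.algebraMap_apply, RatFunc.algebraMap_eq_C, div_eq_mul_inv]
  rfl

lemma evalAt_regularWeight {K : Type*} [Field K] (q c : K) (k : ℕ+) :
    evalAt c (regularWeight q c k) = (1 - c ^ (k : ℕ)) / (1 - q ^ (k : ℕ)) * (k : ℕ) := by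
  rw [regularWeight, map_mul, map_mul, evalAt_algebraMap, map_natCast, map_sub, map_pow, map_one,
    evalAt_regularX, div_eq_mul_inv]

end SymFn

open SymFn in
theorem Qprime_rectangle_root_of_unity_general {k : Type} [Field k] [CharZero k] {z : k}
    {l : ℕ+} (hz : IsPrimitiveRoot z l) (r : ℕ+)
    {P : Multiset ℕ+ → SymFn (RatFunc (RatFunc k))}
    (hP : IsMacdonaldBasis (RatFunc.C (RatFunc.X : RatFunc k))
      (RatFunc.X : RatFunc (RatFunc k)) P) :
    ∃ F : SymFn (regularAt (RatFunc.C z)),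
      map (algebraMap (regularAt (RatFunc.C z)) (RatFunc (RatFunc k))) F =
        Qprime (RatFunc.C (RatFunc.X : RatFunc k)) (RatFunc.X : RatFunc (RatFunc k)) P
          (Multiset.replicate l r) ∧
      map (evalAt (RatFunc.C z)) F =
        (-1 : RatFunc k) ^ (((l : ℕ) - 1) * r) • plethP l (hsym (R := RatFunc k) r) := by
  set c : RatFunc k := RatFunc.C z
  have hc : IsPrimitiveRoot c l := hz.map_of_injective (RatFunc.C (K := k)).injective
  have hdet : IsUnit
      (gramMatrix (regularWeight RatFunc.X c) (hNonRect (regularAt c) l r)).det := by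
    refine isUnit_of_evalAt_ne_zero ?_
    have h := map_det_gramMatrix_hNonRect (evalAt c)
      (regularWeight RatFunc.X c) l r
    refine h.trans_ne ?_
    simpa only [evalAt_regularWeight] using det_gramMatrix_root_of_unity_ne_zero hz r
  refine ⟨_, map_residual_hNonRect (algebraMap (regularAt c) (RatFunc (RatFunc k))) hdet ?_,
    map_residual_hNonRect (evalAt c) hdet ?_⟩
  · simp only [algebraMap_regularWeight]
    refine isResidual_Qprime hP (fun j => ?_) (fun j => one_sub_X_pow_ne_zero j.ne_zero) l r
    rw [← map_pow, ← map_one RatFunc.C, ← map_sub]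
    exact (map_ne_zero RatFunc.C).mpr (one_sub_X_pow_ne_zero j.ne_zero)
  · rw [plethP_hsym]
    refine isResidual_hAt_X_mul hc (fun j => ?_) r
    simp [evalAt_regularWeight, pow_mul, hc.pow_eq_one]

/-- **Plethystic specialization of `Q'` at a primitive root of unity** (Theorem 3.3 of the
paper).  Let `l, r` be positive integers and `ζ` a primitive `l`-th root of unity.  Then
`Q'_{(r^l)}(x; q, ζ) = (-1)^{(l-1)r} (p_l ∘ h_r)(x)`. -/
theorem Qprime_rectangle_root_of_unity
    (l r : ℕ) (hl : 0 < l) (hr : 0 < r)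
    (zeta : ℂ) (hzeta : IsPrimitiveRoot zeta l)
    (P : Multiset ℕ+ → SymFn FF) (hP : IsMacdonaldBasis qF tF P) :
    specT (RatFunc.C zeta) (Qprime qF tF P (Multiset.replicate l ⟨r, hr⟩)) =
      ((-1 : KK) ^ ((l - 1) * r)) • plethP (⟨l, hl⟩ : ℕ+) (hsym (R := KK) r) := by
  obtain ⟨F, hF, hF_eval⟩ :=
    Qprime_rectangle_root_of_unity_general (l := ⟨l, hl⟩) hzeta ⟨r, hr⟩ hP
  exact (congrArg _ hF.symm).trans ((SymFn.specT_map _ F).trans hF_eval)
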